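/- arXiv:1106.4714 — 4 statements merged into one kernel-verified Lean document; each statement's English description precedes it below -/
import Mathlib

section
/- Let t ↦ 𝐜(t) be a differentiable curve in M_N([0,∞)). Then for every β ≥ 0, d/dt p_N(β,𝐜(t)) = (1/(2N²)) Σ_{i,j=1}^N (dc_{ij}/dt) · 𝔼_{N,𝐜(t)}[ ln( 1 − (1−e^{−β}) ⟨δ(σ_i,σ_j)⟩_{N,βJ} ) ]. -/
open MeasureTheory Filter

/-- Poisson probability mass function with parameter `lam`. -/
noncomputable def poissonPMF (lam : ℝ) (k : ℕ) : ℝ :=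
  Real.exp (-lam) * lam ^ k / (Nat.factorial k)

/-- Potts Hamiltonian `H_N(σ, J) = Σ_{i,j} J_{ij} δ(σ_i, σ_j)`. -/
noncomputable def potts.H (q N : ℕ) (σ : Fin N → Fin q) (J : Fin N → Fin N → ℝ) : ℝ :=
  ∑ i, ∑ j, J i j * (if σ i = σ j then (1 : ℝ) else 0)

/-- Partition function `Z_N(J)`. -/
noncomputable def potts.Z (q N : ℕ) (J : Fin N → Fin N → ℝ) : ℝ :=
  ∑ σ : Fin N → Fin q, Real.exp (- potts.H q N σ J)

/-- Expectation over the Poissonian disorder: the entries `J_{ij}` are independent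
Poisson random variables with means `c_{ij} / (2N)`. -/
noncomputable def potts.E (N : ℕ) (c : Fin N → Fin N → ℝ)
    (g : (Fin N → Fin N → ℕ) → ℝ) : ℝ :=
  ∑' J : Fin N → Fin N → ℕ,
    (∏ i, ∏ j, poissonPMF (c i j / (2 * N)) (J i j)) * g J

/-- Quenched pressure for a general nonnegative connectivity matrix `c`. -/
noncomputable def potts.pmat (q N : ℕ) (β : ℝ) (c : Fin N → Fin N → ℝ) : ℝ :=
  potts.E N c (fun J => (1 / N) * Real.log (potts.Z q N (fun i j => β * (J i j : ℝ))))

/-- Quenched pressure for the constant connectivity matrix `c_{ij} ≡ c`. -/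
noncomputable def potts.p (q N : ℕ) (β c : ℝ) : ℝ :=
  potts.pmat q N β (fun _ _ => c)

/-- Annealed pressure `𝒫(β, c) = ln q + (c/2) ln(1 - (1 - e^{-β})/q)`. -/
noncomputable def potts.annealed (q : ℕ) (β c : ℝ) : ℝ :=
  Real.log q + (c / 2) * Real.log (1 - (1 - Real.exp (-β)) / q)

/-- Gibbs expectation `⟨f⟩_{N,J}`. -/
noncomputable def potts.gibbsAvg (q N : ℕ) (J : Fin N → Fin N → ℝ)
    (f : (Fin N → Fin q) → ℝ) : ℝ :=
  (∑ σ : Fin N → Fin q, f σ * Real.exp (- potts.H q N σ J)) / potts.Z q N J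

/-- one-variable derivative of the Poisson mass function. -/
noncomputable def pmfD (lam : ℝ) (k : ℕ) : ℝ :=
  (if k = 0 then 0 else poissonPMF lam (k - 1)) - poissonPMF lam k

lemma poisson_hasDeriv (x : ℝ) (k : ℕ) : HasDerivAt (fun y => poissonPMF y k) (pmfD x k) x := by
  unfold pmfD poissonPMF
  have h := (((hasDerivAt_neg x).exp).mul (hasDerivAt_pow k x)).div_const (Nat.factorial k : ℝ)
  refine h.congr_deriv ?_
  rcases k with _ | k
  · simp
  · have : (k.factorial : ℝ) ≠ 0 := by positivity
    have : (k + 1 : ℝ) ≠ 0 := by positivity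
    simp [Nat.factorial_succ]
    field_simp
    ring

lemma poisson_bound (R x : ℝ) (hR : 1 ≤ R) (hx : |x| ≤ R) (k : ℕ) :
    |poissonPMF x k| ≤ Real.exp R * R ^ k / k.factorial := by
  unfold poissonPMF
  rw [abs_div, abs_mul, abs_pow, Real.abs_exp, Nat.abs_cast]
  have : -x ≤ R := (neg_le_abs x).trans hx
  gcongr

lemma poisson_bound2 (R x : ℝ) (hR : 1 ≤ R) (hx : |x| ≤ R) (k : ℕ) :
    |poissonPMF x k| ≤ Real.exp R * (2 * R) ^ k / k.factorial := by
  refine (poisson_bound R x hR hx k).trans ?_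
  have : R ≤ 2 * R := by linarith
  gcongr

lemma pmfD_bound (R x : ℝ) (hR : 1 ≤ R) (hx : |x| ≤ R) (k : ℕ) :
    |pmfD x k| ≤ Real.exp R * (2 * R) ^ k / k.factorial := by
  unfold pmfD
  rcases k with _ | k
  · simpa using poisson_bound R x hR hx 0
  · simp only [Nat.succ_ne_zero, if_false, Nat.add_sub_cancel]
    have h1 := poisson_bound R x hR hx k
    have h2 := poisson_bound R x hR hx (k + 1)
    refine (abs_sub _ _).trans ((add_le_add h1 h2).trans ?_)
    have hk : (0 : ℝ) < k.factorial := by positivity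
    have hk1 : (0 : ℝ) < (k : ℝ) + 1 := by positivity
    have e : Real.exp R * R ^ k / k.factorial
        = (Real.exp R * R ^ k / (k + 1).factorial) * (k + 1) := by
      rw [Nat.factorial_succ]; push_cast; field_simp
    rw [e, mul_pow, pow_succ R]
    have h2k : (k : ℝ) + 1 + 1 ≤ 2 ^ (k + 1) := by
      have := Nat.lt_two_pow_self (n := k + 1)
      exact_mod_cast this
    have hA : 0 ≤ Real.exp R * R ^ k / (k + 1).factorial := by positivity
    calc _ = (Real.exp R * R ^ k / (k + 1).factorial) * ((k + 1) + R) := by ring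
      _ ≤ (Real.exp R * R ^ k / (k + 1).factorial) * (2 ^ (k + 1) * R) := by
        gcongr; nlinarith
      _ = _ := by ring

lemma summable_pi_fin (b : ℕ → ℝ) (hb : Summable b) (h0 : ∀ k, 0 ≤ b k) (n : ℕ) :
    Summable (fun J : Fin n → ℕ => ∏ e, b (J e)) := by
  induction n with
  | zero => exact (hasSum_fintype _).summable
  | succ n ih =>
    have h := hb.mul_of_nonneg ih h0 (fun J => Finset.prod_nonneg fun e _ => h0 _)
    rw [← (Fin.consEquiv (fun _ : Fin (n+1) => ℕ)).summable_iff]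
    refine h.congr ?_
    rintro ⟨a, J⟩
    simp [Fin.consEquiv, Fin.prod_univ_succ]

lemma summable_pi {ι : Type} [Fintype ι] (b : ℕ → ℝ) (hb : Summable b) (h0 : ∀ k, 0 ≤ b k) :
    Summable (fun J : ι → ℕ => ∏ e, b (J e)) := by
  have h := summable_pi_fin b hb h0 (Fintype.card ι)
  rw [← (Equiv.arrowCongr (Fintype.equivFin ι) (Equiv.refl ℕ)).summable_iff] at h
  refine h.congr fun J => ?_
  simp only [Function.comp, Equiv.arrowCongr_apply]
  exact (Fintype.equivFin ι).symm.prod_comp (fun e => b (J e))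

lemma prod_erase_bound {ι : Type} [Fintype ι] [DecidableEq ι] (R : ℝ) (hR : 1 ≤ R) (x : ι → ℝ)
    (hx : ∀ e, |x e| ≤ R) (J : ι → ℕ) (e : ι) :
    |(∏ a ∈ Finset.univ.erase e, poissonPMF (x a) (J a)) * pmfD (x e) (J e)|
      ≤ ∏ a, (Real.exp R * (2 * R) ^ (J a) / (J a).factorial) := by
  rw [← Finset.prod_erase_mul _ _ (Finset.mem_univ e), abs_mul, Finset.abs_prod]
  refine mul_le_mul ?_ (pmfD_bound R _ hR (hx e) _) (abs_nonneg _) ?_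
  · exact Finset.prod_le_prod (fun _ _ => abs_nonneg _) (fun a _ => poisson_bound2 R _ hR (hx a) _)
  · exact Finset.prod_nonneg fun _ _ => by positivity

lemma prod_bound {ι : Type} [Fintype ι] (R : ℝ) (hR : 1 ≤ R) (x : ι → ℝ)
    (hx : ∀ e, |x e| ≤ R) (J : ι → ℕ) :
    |∏ a, poissonPMF (x a) (J a)|
      ≤ ∏ a, (Real.exp R * (2 * R) ^ (J a) / (J a).factorial) := by
  rw [Finset.abs_prod]
  exact Finset.prod_le_prod (fun _ _ => abs_nonneg _) (fun a _ => poisson_bound2 R _ hR (hx a) _)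

lemma summable_bd {ι : Type} [Fintype ι] (R : ℝ) (hR : 1 ≤ R) (C : ℝ) (g : (ι → ℕ) → ℝ)
    (hg : ∀ J, |g J| ≤ C * ∏ e, (2 : ℝ) ^ (J e)) :
    Summable (fun J : ι → ℕ =>
      (∏ a, (Real.exp R * (2 * R) ^ (J a) / (J a).factorial)) * |g J|) := by
  have hs : Summable (fun k : ℕ => Real.exp R * ((2 * R * 2) ^ k / k.factorial)) :=
    (Real.summable_pow_div_factorial _).mul_left _
  have h := (summable_pi (ι := ι) _ hs (fun k => by positivity)).mul_left C
  refine Summable.of_nonneg_of_le (fun J => ?_) (fun J => ?_) h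
  · exact mul_nonneg (Finset.prod_nonneg fun _ _ => by positivity) (abs_nonneg _)
  · refine (mul_le_mul_of_nonneg_left (hg J)
      (Finset.prod_nonneg fun _ _ => by positivity)).trans (le_of_eq ?_)
    rw [mul_left_comm, ← Finset.prod_mul_distrib]
    congr 1
    refine Finset.prod_congr rfl fun a _ => ?_
    rw [mul_pow (2 * R) 2]
    ring

lemma tsum_shift {ι : Type} [Fintype ι] [DecidableEq ι] (x : ι → ℝ) (g : (ι → ℕ) → ℝ) (e : ι) :
    ∑' J : ι → ℕ, (∏ a ∈ Finset.univ.erase e, poissonPMF (x a) (J a)) *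
        (if J e = 0 then 0 else poissonPMF (x e) (J e - 1)) * g J
      = ∑' J : ι → ℕ, (∏ a, poissonPMF (x a) (J a)) * g (J + Pi.single e 1) := by
  have hinj : Function.Injective (fun J : ι → ℕ => J + Pi.single e 1) := add_left_injective _
  rw [← hinj.tsum_eq]
  · refine tsum_congr fun J => ?_
    rw [← Finset.prod_erase_mul _ _ (Finset.mem_univ e)]
    congr 2
    · refine Finset.prod_congr rfl fun a ha => ?_
      simp [Finset.ne_of_mem_erase ha]
    · simp
  · intro J hJ
    refine ⟨J - Pi.single e 1, ?_⟩
    have : J e ≠ 0 := by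
      intro h0
      simp [h0] at hJ
    funext a
    by_cases ha : a = e
    · subst ha
      simp; omega
    · simp [ha]

lemma summable_P {ι : Type} [Fintype ι] (x : ι → ℝ) (C : ℝ) (g : (ι → ℕ) → ℝ)
    (hg : ∀ J, |g J| ≤ C * ∏ e, (2 : ℝ) ^ (J e)) :
    Summable (fun J : ι → ℕ => (∏ a, poissonPMF (x a) (J a)) * g J) := by
  have hR : (1 : ℝ) ≤ ‖x‖ + 1 := by linarith [norm_nonneg x]
  refine Summable.of_norm_bounded (summable_bd (‖x‖ + 1) hR C g hg) fun J => ?_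
  rw [Real.norm_eq_abs, abs_mul]
  gcongr
  exact prod_bound _ hR x (fun e => (norm_le_pi_norm x e).trans (by linarith)) J

lemma summable_D {ι : Type} [Fintype ι] [DecidableEq ι] (x : ι → ℝ) (C : ℝ) (g : (ι → ℕ) → ℝ)
    (hg : ∀ J, |g J| ≤ C * ∏ e, (2 : ℝ) ^ (J e)) (e : ι) :
    Summable (fun J : ι → ℕ => (∏ a ∈ Finset.univ.erase e, poissonPMF (x a) (J a)) *
      pmfD (x e) (J e) * g J) := by
  have hR : (1 : ℝ) ≤ ‖x‖ + 1 := by linarith [norm_nonneg x]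
  refine Summable.of_norm_bounded (summable_bd (‖x‖ + 1) hR C g hg) fun J => ?_
  rw [Real.norm_eq_abs, abs_mul]
  gcongr
  exact prod_erase_bound _ hR x (fun e => (norm_le_pi_norm x e).trans (by linarith)) J e

lemma shift_bd {ι : Type} [Fintype ι] [DecidableEq ι] (C : ℝ) (g : (ι → ℕ) → ℝ)
    (hg : ∀ J, |g J| ≤ C * ∏ e, (2 : ℝ) ^ (J e)) (e : ι) (J : ι → ℕ) :
    |g (J + Pi.single e 1)| ≤ (C * 2) * ∏ e, (2 : ℝ) ^ (J e) := by
  refine (hg _).trans (le_of_eq ?_)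
  have h : ∑ i, (J + Pi.single e 1 : ι → ℕ) i = ∑ i, J i + 1 := by
    simp [Finset.sum_add_distrib]
  rw [Finset.prod_pow_eq_pow_sum, Finset.prod_pow_eq_pow_sum, h, pow_succ]
  ring

lemma tsum_D {ι : Type} [Fintype ι] [DecidableEq ι] (x : ι → ℝ) (C : ℝ) (g : (ι → ℕ) → ℝ)
    (hg : ∀ J, |g J| ≤ C * ∏ e, (2 : ℝ) ^ (J e)) (e : ι) :
    ∑' J : ι → ℕ, (∏ a ∈ Finset.univ.erase e, poissonPMF (x a) (J a)) *
      pmfD (x e) (J e) * g J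
    = ∑' J : ι → ℕ, (∏ a, poissonPMF (x a) (J a)) * (g (J + Pi.single e 1) - g J) := by
  have h1 := summable_P x C g hg
  have h2 := summable_P x _ _ (shift_bd C g hg e)
  have h3 := summable_D x C g hg e
  have hh := tsum_shift x g e
  have e1 : ∀ J : ι → ℕ, (∏ a ∈ Finset.univ.erase e, poissonPMF (x a) (J a)) *
        (if J e = 0 then 0 else poissonPMF (x e) (J e - 1)) * g J
      = (∏ a ∈ Finset.univ.erase e, poissonPMF (x a) (J a)) * pmfD (x e) (J e) * g J
        + (∏ a, poissonPMF (x a) (J a)) * g J := by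
    intro J
    rw [← Finset.prod_erase_mul _ (fun a => poissonPMF (x a) (J a)) (Finset.mem_univ e), pmfD]
    ring
  rw [tsum_congr e1, h3.tsum_add h1] at hh
  simp_rw [mul_sub]
  rw [h2.tsum_sub h1, ← hh]
  ring

lemma hasDeriv_gen {ι : Type} [Fintype ι] [DecidableEq ι] (C : ℝ) (g : (ι → ℕ) → ℝ)
    (hg : ∀ J, |g J| ≤ C * ∏ e, (2 : ℝ) ^ (J e)) (x : ℝ → ι → ℝ) (x' : ι → ℝ) (t : ℝ)
    (hx : HasDerivAt x x' t) :
    HasDerivAt (fun s => ∑' J : ι → ℕ, (∏ a, poissonPMF (x s a) (J a)) * g J)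
      (∑ e, x' e * ∑' J : ι → ℕ, (∏ a, poissonPMF (x t a) (J a)) *
        (g (J + Pi.single e 1) - g J)) t := by
  set R : ℝ := ‖x t‖ + 1 with hRdef
  have hR : (1 : ℝ) ≤ R := by linarith [norm_nonneg (x t)]
  set f' : (ι → ℕ) → (ι → ℝ) → ((ι → ℝ) →L[ℝ] ℝ) := fun J y =>
    g J • ∑ e, (∏ a ∈ Finset.univ.erase e, poissonPMF (y a) (J a)) •
      (pmfD (y e) (J e) • ContinuousLinearMap.proj (R := ℝ) (φ := fun _ : ι => ℝ) e) with hf'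
  have hu := (summable_bd R hR C g hg).mul_left (Fintype.card ι : ℝ)
  have hf : ∀ (J : ι → ℕ) (y : ι → ℝ), y ∈ Metric.ball (0 : ι → ℝ) R →
      HasFDerivAt (fun y : ι → ℝ => (∏ a, poissonPMF (y a) (J a)) * g J) (f' J y) y := by
    intro J y _
    refine HasFDerivAt.mul_const (HasFDerivAt.finsetProd (fun e _ => ?_)) (g J)
    exact (poisson_hasDeriv (y e) (J e)).comp_hasFDerivAt y
      (ContinuousLinearMap.proj (R := ℝ) (φ := fun _ : ι => ℝ) e).hasFDerivAt
  have hbd : ∀ (J : ι → ℕ) (y : ι → ℝ), y ∈ Metric.ball (0 : ι → ℝ) R → ‖f' J y‖ ≤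
      (Fintype.card ι : ℝ) *
        ((∏ a, (Real.exp R * (2 * R) ^ (J a) / (J a).factorial)) * |g J|) := by
    intro J y hy
    have hyR : ∀ e, |y e| ≤ R := fun e =>
      (norm_le_pi_norm y e).trans (le_of_lt (by simpa using hy))
    simp only [hf']
    rw [norm_smul, Real.norm_eq_abs, mul_comm, ← mul_assoc]
    gcongr
    refine (norm_sum_le _ _).trans ?_
    have : ∀ e ∈ Finset.univ, ‖(∏ a ∈ Finset.univ.erase e, poissonPMF (y a) (J a)) •
      (pmfD (y e) (J e) • ContinuousLinearMap.proj (R := ℝ) (φ := fun _ : ι => ℝ) e)‖ ≤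
        ∏ a, (Real.exp R * (2 * R) ^ (J a) / (J a).factorial) := by
      intro e _
      rw [smul_smul, norm_smul, Real.norm_eq_abs]
      refine le_trans ?_ (prod_erase_bound R hR y hyR J e)
      refine mul_le_of_le_one_right (abs_nonneg _) ?_
      refine ContinuousLinearMap.opNorm_le_bound _ zero_le_one fun v => ?_
      simpa using norm_le_pi_norm v e
    refine (Finset.sum_le_card_nsmul _ _ _ this).trans (le_of_eq ?_)
    simp
  have hmem : x t ∈ Metric.ball (0 : ι → ℝ) R := by simp [hRdef]
  have key := hasFDerivAt_tsum_of_isPreconnected (x₀ := x t) hu Metric.isOpen_ball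
    (convex_ball (0 : ι → ℝ) R).isPreconnected hf hbd hmem (summable_P (x t) C g hg) hmem
  have hsf : Summable (fun J => f' J (x t)) :=
    Summable.of_norm_bounded hu fun J => hbd J _ hmem
  refine (key.comp_hasDerivAt t hx).congr_deriv ?_
  have happ := (ContinuousLinearMap.apply ℝ ℝ x').map_tsum hsf
  simp only [ContinuousLinearMap.apply_apply] at happ
  rw [happ]
  have e2 : ∀ J, f' J (x t) x' = ∑ e, x' e *
      ((∏ a ∈ Finset.univ.erase e, poissonPMF (x t a) (J a)) * pmfD (x t e) (J e) * g J) := by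
    intro J
    simp only [hf', ContinuousLinearMap.smul_apply, ContinuousLinearMap.sum_apply,
      ContinuousLinearMap.proj_apply, smul_eq_mul, Finset.mul_sum]
    refine Finset.sum_congr rfl fun e _ => ?_
    ring
  rw [tsum_congr e2, Summable.tsum_finsetSum
    (fun e _ => (summable_D (x t) C g hg e).mul_left (x' e))]
  refine Finset.sum_congr rfl fun e _ => ?_
  rw [tsum_mul_left, tsum_D (x t) C g hg e]

lemma E_eq (N : ℕ) (c : Fin N → Fin N → ℝ) (g : (Fin N → Fin N → ℕ) → ℝ) :
    potts.E N c g = ∑' J : Fin N × Fin N → ℕ,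
      (∏ a, poissonPMF (c a.1 a.2 / (2 * N)) (J a)) * g (fun i j => J (i, j)) := by
  unfold potts.E
  rw [← (Equiv.curry (Fin N) (Fin N) ℕ).tsum_eq]
  refine tsum_congr fun J => ?_
  rw [Fintype.prod_prod_type]
  rfl

lemma Z_pos (q N : ℕ) (hq : 2 ≤ q) (J : Fin N → Fin N → ℝ) : 0 < potts.Z q N J := by
  haveI : Nonempty (Fin q) := ⟨⟨0, by omega⟩⟩
  exact Finset.sum_pos (fun _ _ => Real.exp_pos _) Finset.univ_nonempty

lemma logZ_bd (q N : ℕ) (hq : 2 ≤ q) (β : ℝ) (hβ : 0 ≤ β) (J : Fin N → Fin N → ℕ) :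
    |Real.log (potts.Z q N (fun i j => β * (J i j : ℝ)))|
      ≤ Real.log ((q : ℝ) ^ N) + β * ∑ i, ∑ j, (J i j : ℝ) := by
  have hZ := Z_pos q N hq (fun i j => β * (J i j : ℝ))
  have hq1 : (1 : ℝ) ≤ q := by exact_mod_cast (by omega : 1 ≤ q)
  have hlq : 0 ≤ Real.log ((q : ℝ) ^ N) := Real.log_nonneg (one_le_pow₀ hq1)
  have hS : 0 ≤ β * ∑ i, ∑ j, (J i j : ℝ) := by positivity
  have hH0 : ∀ σ : Fin N → Fin q, 0 ≤ potts.H q N σ (fun i j => β * (J i j : ℝ)) := by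
    intro σ
    unfold potts.H
    refine Finset.sum_nonneg fun i _ => Finset.sum_nonneg fun j _ => ?_
    split_ifs <;> simp <;> positivity
  have hH1 : ∀ σ : Fin N → Fin q, potts.H q N σ (fun i j => β * (J i j : ℝ)) ≤
      β * ∑ i, ∑ j, (J i j : ℝ) := by
    intro σ
    unfold potts.H
    simp_rw [Finset.mul_sum]
    refine Finset.sum_le_sum fun i _ => Finset.sum_le_sum fun j _ => ?_
    split_ifs <;> simp <;> positivity
  rw [abs_le]
  constructor
  · have h1 : -(β * ∑ i, ∑ j, (J i j : ℝ)) ≤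
        Real.log (potts.Z q N (fun i j => β * (J i j : ℝ))) := by
      rw [Real.le_log_iff_exp_le hZ]
      let σ : Fin N → Fin q := fun _ => ⟨0, by omega⟩
      refine le_trans (Real.exp_le_exp.mpr (neg_le_neg (hH1 σ))) ?_
      exact Finset.single_le_sum
        (f := fun σ => Real.exp (- potts.H q N σ (fun i j => β * (J i j : ℝ))))
        (fun _ _ => (Real.exp_pos _).le) (Finset.mem_univ σ)
    linarith
  · have h2 : potts.Z q N (fun i j => β * (J i j : ℝ)) ≤ (q : ℝ) ^ N := by
      unfold potts.Z
      refine (Finset.sum_le_card_nsmul _ _ 1 fun σ _ => ?_).trans (le_of_eq (by simp))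
      rw [Real.exp_le_one_iff]
      linarith [hH0 σ]
    linarith [Real.log_le_log hZ h2]

lemma Z_ratio (q N : ℕ) (hq : 2 ≤ q) (β : ℝ) (J : Fin N × Fin N → ℕ) (e : Fin N × Fin N) :
    Real.log (potts.Z q N (fun i j => β * ((J + Pi.single e 1 : Fin N × Fin N → ℕ) (i, j) : ℝ)))
      - Real.log (potts.Z q N (fun i j => β * (J (i, j) : ℝ)))
    = Real.log (1 - (1 - Real.exp (-β)) * potts.gibbsAvg q N (fun i j => β * (J (i, j) : ℝ))
            (fun σ => if σ e.1 = σ e.2 then (1 : ℝ) else 0)) := by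
  have h1 := Z_pos q N hq (fun i j => β * ((J + Pi.single e 1 : Fin N × Fin N → ℕ) (i, j) : ℝ))
  have h2 := Z_pos q N hq (fun i j => β * (J (i, j) : ℝ))
  rw [← Real.log_div h1.ne' h2.ne']
  congr 1
  unfold potts.gibbsAvg
  rw [div_eq_iff h2.ne', sub_mul, mul_assoc, div_mul_cancel₀ _ h2.ne', one_mul]
  unfold potts.Z
  rw [Finset.mul_sum, ← Finset.sum_sub_distrib]
  refine Finset.sum_congr rfl fun σ _ => ?_
  have hH : potts.H q N σ (fun i j => β * ((J + Pi.single e 1 : Fin N × Fin N → ℕ) (i, j) : ℝ))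
      = potts.H q N σ (fun i j => β * (J (i, j) : ℝ)) +
        β * (if σ e.1 = σ e.2 then (1 : ℝ) else 0) := by
    unfold potts.H
    simp only [← Fintype.sum_prod_type' (f := fun i j =>
      β * ((J + Pi.single e 1 : Fin N × Fin N → ℕ) (i, j) : ℝ) * (if σ i = σ j then (1 : ℝ) else 0)),
      ← Fintype.sum_prod_type' (f := fun i j =>
      β * (J (i, j) : ℝ) * (if σ i = σ j then (1 : ℝ) else 0))]
    simp only [Pi.add_apply, Nat.cast_add, mul_add, add_mul, Finset.sum_add_distrib]
    congr 1
    rw [Finset.sum_eq_single e]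
    · simp
    · intro b _ hb
      simp [hb]
    · simp
  rw [hH, neg_add, Real.exp_add]
  by_cases h : σ e.1 = σ e.2
  · simp [h]; ring
  · simp [h]

/-- derivative of the quenched pressure along a differentiable
curve of connectivity matrices. -/
theorem statement0 (q N : ℕ) (hq : 2 ≤ q) (hN : 0 < N) (β : ℝ) (hβ : 0 ≤ β)
    (c c' : ℝ → Fin N → Fin N → ℝ)
    (hpos : ∀ t i j, 0 ≤ c t i j)
    (hderiv : ∀ t i j, HasDerivAt (fun s => c s i j) (c' t i j) t)
    (t : ℝ) :
    HasDerivAt (fun s => potts.pmat q N β (c s))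
      ((1 / (2 * (N : ℝ) ^ 2)) * ∑ i, ∑ j, c' t i j *
        potts.E N (c t) (fun J => Real.log (1 - (1 - Real.exp (-β)) *
          potts.gibbsAvg q N (fun a b => β * (J a b : ℝ))
            (fun σ => if σ i = σ j then (1 : ℝ) else 0)))) t := by
  set g : (Fin N × Fin N → ℕ) → ℝ := fun J =>
    (1 / N) * Real.log (potts.Z q N (fun i j => β * (J (i, j) : ℝ))) with hgdef
  have hN0 : (N : ℝ) ≠ 0 := by positivity
  have hq1 : (1 : ℝ) ≤ q := by exact_mod_cast (by omega : 1 ≤ q)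
  have hlq : 0 ≤ Real.log ((q : ℝ) ^ N) := Real.log_nonneg (one_le_pow₀ hq1)
  have hg : ∀ J, |g J| ≤ ((1 / N) * (Real.log ((q : ℝ) ^ N) + β)) * ∏ e, (2 : ℝ) ^ (J e) := by
    intro J
    have hb := logZ_bd q N hq β hβ (fun i j => J (i, j))
    rw [hgdef]
    simp only
    rw [abs_mul, abs_of_nonneg (by positivity : (0 : ℝ) ≤ 1 / N), mul_assoc]
    refine mul_le_mul_of_nonneg_left (hb.trans ?_) (by positivity)
    rw [Finset.prod_pow_eq_pow_sum, ← Fintype.sum_prod_type' (f := fun i j => (J (i, j) : ℝ))]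
    have h1 : (1 : ℝ) ≤ 2 ^ (∑ e, J e) := one_le_pow₀ (by norm_num)
    have h2 : ((∑ e, J e : ℕ) : ℝ) ≤ 2 ^ (∑ e, J e) := by
      exact_mod_cast (Nat.lt_two_pow_self (n := ∑ e, J e)).le
    push_cast at h2
    rw [add_mul]
    exact add_le_add (le_mul_of_one_le_right hlq h1) (mul_le_mul_of_nonneg_left h2 hβ)
  have hx : HasDerivAt (fun s => (fun a : Fin N × Fin N => c s a.1 a.2 / (2 * N)))
      (fun a => c' t a.1 a.2 / (2 * N)) t :=
    hasDerivAt_pi.mpr fun a => (hderiv t a.1 a.2).div_const _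
  have main := hasDeriv_gen _ g hg _ _ t hx
  unfold potts.pmat
  simp_rw [E_eq]
  refine main.congr_deriv ?_
  rw [Fintype.sum_prod_type, Finset.mul_sum]
  refine Finset.sum_congr rfl fun i _ => ?_
  rw [Finset.mul_sum]
  refine Finset.sum_congr rfl fun j _ => ?_
  have : ∀ J : Fin N × Fin N → ℕ, g (J + Pi.single (i, j) 1) - g J = (1 / N) *
      Real.log (1 - (1 - Real.exp (-β)) * potts.gibbsAvg q N (fun i j => β * (J (i, j) : ℝ))
            (fun σ => if σ i = σ j then (1 : ℝ) else 0)) := by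
    intro J
    rw [hgdef]
    simp only
    rw [← mul_sub, Z_ratio q N hq β J (i, j)]
  simp_rw [this, mul_left_comm _ (1 / (N : ℝ))]
  rw [tsum_mul_left]
  field_simp
end

section
/- For all β ≥ 0, c ≥ 0 and N₁, N₂ ∈ ℕ, the quenched pressure is superadditive: p_{N₁+N₂}(β,c) ≥ (N₁/(N₁+N₂)) p_{N₁}(β,c) + (N₂/(N₁+N₂)) p_{N₂}(β,c). -/
open MeasureTheory Filter

noncomputable def pm {E : Type} [Fintype E] (l : E → ℝ) : Measure (E → ℕ) :=
  Measure.pi (fun e => ProbabilityTheory.poissonMeasure (l e).toNNReal)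

noncomputable def ex {E : Type} [Fintype E] (l : E → ℝ) (g : (E → ℕ) → ℝ) : ℝ :=
  ∑' J : E → ℕ, (∏ e, poissonPMF (l e) (J e)) * g J

def lin {E : Type} [Fintype E] (g : (E → ℕ) → ℝ) : Prop :=
  ∃ C D : ℝ, ∀ J, |g J| ≤ C + D * ∑ e, (J e : ℝ)

instance pm_prob {E : Type} [Fintype E] (l : E → ℝ) : IsProbabilityMeasure (pm l) := by
  unfold pm; infer_instance

lemma pm_real {E : Type} [Fintype E] (l : E → ℝ) (hl : ∀ e, 0 ≤ l e) (J : E → ℕ) :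
    (pm l).real {J} = ∏ e, poissonPMF (l e) (J e) := by
  rw [pm, measureReal_def, Measure.pi_singleton, ENNReal.toReal_prod]
  refine Finset.prod_congr rfl fun e _ => ?_
  rw [← measureReal_def, ProbabilityTheory.poissonMeasure_real_singleton, poissonPMF,
    Real.coe_toNNReal _ (hl e)]

lemma po_int (r : NNReal) :
    Integrable (fun n : ℕ => (n : ℝ)) (ProbabilityTheory.poissonMeasure r) := by
  rw [ProbabilityTheory.integrable_poissonMeasure_iff]
  have h := (Real.summable_pow_div_factorial (2 * (r : ℝ))).mul_left (Real.exp (-r))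
  refine Summable.of_nonneg_of_le (fun n => by positivity) (fun n => ?_) h
  have h2 : (n : ℝ) ≤ 2 ^ n := by exact_mod_cast Nat.lt_two_pow_self.le
  rw [Real.norm_of_nonneg (by positivity), mul_pow, mul_div_assoc, mul_assoc]
  refine mul_le_mul_of_nonneg_left ?_ (by positivity)
  calc (r : ℝ) ^ n / n.factorial * n ≤ (r : ℝ) ^ n / n.factorial * 2 ^ n := by gcongr
    _ = _ := by ring

lemma lin_int {E : Type} [Fintype E] (l : E → ℝ) {g : (E → ℕ) → ℝ} (hg : lin g) :
    Integrable g (pm l) := by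
  obtain ⟨C, D, h⟩ := hg
  have hi : Integrable (fun J : E → ℕ => C + D * ∑ e, (J e : ℝ)) (pm l) := by
    refine (integrable_const _).add (Integrable.const_mul ?_ _)
    refine integrable_finsetSum _ fun e _ => ?_
    exact integrable_comp_eval (μ := fun e => ProbabilityTheory.poissonMeasure (l e).toNNReal)
      (i := e) (po_int _)
  refine hi.mono' (measurable_of_countable g).aestronglyMeasurable (Eventually.of_forall h)

lemma ex_eq {E : Type} [Fintype E] (l : E → ℝ) (hl : ∀ e, 0 ≤ l e) {g : (E → ℕ) → ℝ}
    (hg : lin g) : ex l g = ∫ J, g J ∂(pm l) := by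
  rw [integral_countable (lin_int l hg), ex]
  simp_rw [pm_real l hl, smul_eq_mul]

lemma ex_summable {E : Type} [Fintype E] (l : E → ℝ) (hl : ∀ e, 0 ≤ l e) {g : (E → ℕ) → ℝ}
    (hg : lin g) : Summable (fun J : E → ℕ => (∏ e, poissonPMF (l e) (J e)) * g J) := by
  have h := (lin_int l hg)
  rw [← Measure.restrict_univ (μ := pm l), ← Set.iUnion_of_singleton] at h
  have := (hasSum_integral_iUnion (μ := pm l) (f := g) (s := fun J : E → ℕ => {J})
    (fun J => measurableSet_singleton J) (fun a b hab => by simpa using hab) h).summable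
  simp only [integral_singleton, pm_real l hl, smul_eq_mul] at this
  exact this

lemma pm_map {E F : Type} [Fintype E] [Fintype F] (l : E → ℝ) (i : F → E)
    (hi : Function.Injective i) :
    (pm l).map (fun J a => J (i a)) = pm (fun a => l (i a)) := by
  classical
  symm
  refine Measure.pi_eq fun s hs => ?_
  rw [Measure.map_apply (by fun_prop) (MeasurableSet.univ_pi hs)]
  have : (fun (J : E → ℕ) a => J (i a)) ⁻¹' (Set.univ.pi s) =
      Set.univ.pi (fun e => ⋂ (a : F) (_ : i a = e), s a) := by
    ext J; simp
    constructor
    · rintro h e a rfl; exact h a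
    · intro h a; exact h _ a rfl
  rw [this, pm, Measure.pi_pi]
  symm
  apply Fintype.prod_of_injective i hi
  · intro e he
    have : (⋂ (a : F) (_ : i a = e), s a) = Set.univ := by
      simp only [Set.iInter_eq_univ]
      intro a h; exact absurd ⟨a, h⟩ he
    rw [this]; simp
  · intro a
    congr 1
    ext x; simp [hi.eq_iff]

lemma ex_marg {E F : Type} [Fintype E] [Fintype F] (l : E → ℝ) (hl : ∀ e, 0 ≤ l e) (i : F → E)
    (hi : Function.Injective i) (g : (F → ℕ) → ℝ) (hg : lin g) :
    ex l (fun J => g (fun a => J (i a))) = ex (fun a => l (i a)) g ∧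
      lin (fun J : E → ℕ => g (fun a => J (i a))) := by
  have hlin : lin (fun J : E → ℕ => g (fun a => J (i a))) := by
    obtain ⟨C, D, h⟩ := hg
    refine ⟨C, |D|, fun J => (h _).trans ?_⟩
    have h1 : ∑ a, (J (i a) : ℝ) ≤ ∑ e, (J e : ℝ) := by
      classical
      rw [← Finset.sum_image (s := Finset.univ) (g := i) (f := fun e => (J e : ℝ))
        (fun a _ b _ h => hi h)]
      exact Finset.sum_le_sum_of_subset_of_nonneg (Finset.subset_univ _) (fun _ _ _ => by positivity)
    have h0 : 0 ≤ ∑ a, (J (i a) : ℝ) := Finset.sum_nonneg fun _ _ => by positivity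
    have := le_abs_self D
    have := abs_nonneg D
    gcongr
  refine ⟨?_, hlin⟩
  rw [ex_eq l hl hlin, ex_eq _ (fun a => hl _) hg, ← pm_map l i hi, integral_map (measurable_of_countable _).aemeasurable
    (measurable_of_countable g).aestronglyMeasurable]

lemma ex_add {E : Type} [Fintype E] (l : E → ℝ) (hl : ∀ e, 0 ≤ l e) {g h : (E → ℕ) → ℝ}
    (hg : lin g) (hh : lin h) : ex l (fun J => g J + h J) = ex l g + ex l h := by
  unfold ex
  rw [← (ex_summable l hl hg).tsum_add (ex_summable l hl hh)]
  simp_rw [mul_add]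

noncomputable def ev {E : Type} (g : (E → ℕ) → ℝ) : MvPolynomial E ℝ →ₗ[ℝ] ℝ :=
  (MvPolynomial.basisMonomials E ℝ).constr ℝ (fun m => g m)

lemma ev_mono {E : Type} (g : (E → ℕ) → ℝ) (m : E →₀ ℕ) (a : ℝ) :
    ev g (MvPolynomial.monomial m a) = a * g m := by
  have h := (MvPolynomial.basisMonomials E ℝ).constr_basis ℝ (fun m => g m) m
  rw [MvPolynomial.coe_basisMonomials] at h
  have h2 : MvPolynomial.monomial m a = a • MvPolynomial.monomial m (1 : ℝ) := by
    rw [MvPolynomial.smul_monomial]; simp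
  rw [h2, map_smul, smul_eq_mul, ev, h]

noncomputable def lpoly {E : Type} [Fintype E] (l : E → ℝ) : MvPolynomial E ℝ :=
  ∑ e, MvPolynomial.monomial (Finsupp.single e 1) (l e)

def nnc {E : Type} (p : MvPolynomial E ℝ) : Prop := ∀ m, 0 ≤ p.coeff m

lemma nnc_mul {E : Type} {p r : MvPolynomial E ℝ} (hp : nnc p) (hr : nnc r) : nnc (p * r) := by
  classical
  intro m
  rw [MvPolynomial.coeff_mul]
  exact Finset.sum_nonneg fun x _ => mul_nonneg (hp _) (hr _)

lemma nnc_lp {E : Type} [Fintype E] {l : E → ℝ} (hl : ∀ e, 0 ≤ l e) : nnc (lpoly l) := by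
  classical
  intro m
  rw [lpoly, MvPolynomial.coeff_sum]
  refine Finset.sum_nonneg fun e _ => ?_
  rw [MvPolynomial.coeff_monomial]
  split_ifs
  · exact hl e
  · exact le_rfl

lemma nnc_pow {E : Type} {p : MvPolynomial E ℝ} (hp : nnc p) (k : ℕ) : nnc (p ^ k) := by
  classical
  induction k with
  | zero =>
    intro m
    rw [pow_zero, MvPolynomial.coeff_one]
    split_ifs <;> norm_num
  | succ k ih => rw [pow_succ]; exact nnc_mul ih hp

lemma ev_mul_lp {E : Type} [Fintype E] [DecidableEq E] (g : (E → ℕ) → ℝ) (l : E → ℝ)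
    (p : MvPolynomial E ℝ) :
    ev g (p * lpoly l) = ∑ m ∈ p.support, p.coeff m * ∑ e, l e * g (⇑m + Pi.single e 1) := by
  conv_lhs => rw [← MvPolynomial.support_sum_monomial_coeff p]
  rw [Finset.sum_mul, map_sum]
  refine Finset.sum_congr rfl fun m _ => ?_
  rw [lpoly, Finset.mul_sum, map_sum, Finset.mul_sum]
  refine Finset.sum_congr rfl fun e _ => ?_
  rw [MvPolynomial.monomial_mul, ev_mono, mul_assoc, Finsupp.coe_add, Finsupp.single_eq_pi_single]

lemma ev_cmp1 {E : Type} [Fintype E] [DecidableEq E] (g : (E → ℕ) → ℝ) (l l' : E → ℝ)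
    (h : ∀ J : E → ℕ, ∑ e, l' e * g (J + Pi.single e 1) ≤ ∑ e, l e * g (J + Pi.single e 1))
    (p : MvPolynomial E ℝ) (hp : nnc p) : ev g (p * lpoly l') ≤ ev g (p * lpoly l) := by
  rw [ev_mul_lp, ev_mul_lp]
  exact Finset.sum_le_sum fun m _ => mul_le_mul_of_nonneg_left (h m) (hp m)

lemma ev_cmp {E : Type} [Fintype E] [DecidableEq E] (g : (E → ℕ) → ℝ) (l l' : E → ℝ)
    (hl : ∀ e, 0 ≤ l e) (hl' : ∀ e, 0 ≤ l' e)
    (h : ∀ J : E → ℕ, ∑ e, l' e * g (J + Pi.single e 1) ≤ ∑ e, l e * g (J + Pi.single e 1))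
    (k : ℕ) : ∀ (p : MvPolynomial E ℝ), nnc p → ev g (p * lpoly l' ^ k) ≤ ev g (p * lpoly l ^ k) := by
  induction k with
  | zero => intro p _; simp
  | succ k ih =>
    intro p hp
    calc ev g (p * lpoly l' ^ (k + 1)) = ev g ((p * lpoly l') * lpoly l' ^ k) := by congr 1; ring
      _ ≤ ev g ((p * lpoly l') * lpoly l ^ k) := ih _ (nnc_mul hp (nnc_lp hl'))
      _ = ev g ((p * lpoly l ^ k) * lpoly l') := by congr 1; ring
      _ ≤ ev g ((p * lpoly l ^ k) * lpoly l) := ev_cmp1 g l l' h _ (nnc_mul hp (nnc_pow (nnc_lp hl) k))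
      _ = _ := by congr 1; ring

lemma ev_pow {E : Type} [Fintype E] [DecidableEq E] (g : (E → ℕ) → ℝ) (l : E → ℝ) (k : ℕ) :
    ev g (lpoly l ^ k) = k.factorial * ∑ J ∈ Finset.piAntidiag (Finset.univ : Finset E) k,
      (∏ e, l e ^ J e / (J e).factorial) * g J := by
  rw [lpoly, Finset.sum_pow_eq_sum_piAntidiag, map_sum, Finset.mul_sum]
  refine Finset.sum_congr rfl fun J hJ => ?_
  have hs : ∑ e, J e = k := by simpa using hJ
  have h1 : ∏ e, (MvPolynomial.monomial (Finsupp.single e 1) (l e)) ^ J e =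
      MvPolynomial.monomial (Finsupp.equivFunOnFinite.symm J) (∏ e, l e ^ J e) := by
    simp_rw [MvPolynomial.monomial_pow]
    rw [← MvPolynomial.monomial_sum_prod]
    have h0 : (∑ e, Finsupp.single e (J e)) = Finsupp.equivFunOnFinite.symm J := by
      ext e
      simp [Finsupp.finsetSum_apply, Finsupp.single_apply]
    simp only [smul_eq_mul, mul_one, Finsupp.smul_single, h0]
  have h2 : (Nat.multinomial Finset.univ J : MvPolynomial E ℝ) =
      MvPolynomial.C (Nat.multinomial Finset.univ J : ℝ) := by simp
  rw [h1, h2, MvPolynomial.C_mul_monomial, ev_mono]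
  have h3 : (∏ e, ((J e).factorial : ℝ)) * (Nat.multinomial Finset.univ J : ℝ) = k.factorial := by
    have := Nat.multinomial_spec Finset.univ J
    rw [hs] at this
    exact_mod_cast this
  have h4 : (∏ e, ((J e).factorial : ℝ)) ≠ 0 := Finset.prod_ne_zero_iff.2 fun e _ => by positivity
  rw [← h3, Finset.prod_div_distrib]
  simp only [Finsupp.coe_equivFunOnFinite_symm]
  field_simp

lemma pois_prod {E : Type} [Fintype E] (l : E → ℝ) (J : E → ℕ) :
    ∏ e, poissonPMF (l e) (J e) = Real.exp (-∑ e, l e) * ∏ e, l e ^ J e / (J e).factorial := by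
  simp_rw [poissonPMF, mul_div_assoc]
  rw [Finset.prod_mul_distrib, ← Real.exp_sum, Finset.sum_neg_distrib]

lemma ex_sum {E : Type} [Fintype E] [DecidableEq E] (l : E → ℝ) (hl : ∀ e, 0 ≤ l e)
    (g : (E → ℕ) → ℝ) (hg : lin g) :
    HasSum (fun k : ℕ => Real.exp (-∑ e, l e) * (ev g (lpoly l ^ k) / k.factorial)) (ex l g) := by
  have h := (ex_summable l hl hg).hasSum
  rw [← (Equiv.sigmaFiberEquiv (fun J : E → ℕ => ∑ e, J e)).hasSum_iff] at h
  refine h.sigma fun k => ?_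
  have h2 := (Finset.piAntidiag (Finset.univ : Finset E) k).hasSum
    (fun J => (∏ e, poissonPMF (l e) (J e)) * g J)
  have h3 : ∑ J ∈ Finset.piAntidiag (Finset.univ : Finset E) k,
      (∏ e, poissonPMF (l e) (J e)) * g J =
      Real.exp (-∑ e, l e) * (ev g (lpoly l ^ k) / k.factorial) := by
    rw [ev_pow, mul_div_cancel_left₀ _ (by positivity), Finset.mul_sum]
    refine Finset.sum_congr rfl fun J _ => ?_
    rw [pois_prod, mul_assoc]
  rw [h3] at h2
  let eq : {J : E → ℕ // ∑ e, J e = k} ≃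
      {J // J ∈ Finset.piAntidiag (Finset.univ : Finset E) k} :=
    Equiv.subtypeEquivRight (fun J => by simp)
  exact (eq.hasSum_iff).2 h2

lemma ex_cmp {E : Type} [Fintype E] [DecidableEq E] (g : (E → ℕ) → ℝ) (hg : lin g) (l l' : E → ℝ)
    (hl : ∀ e, 0 ≤ l e) (hl' : ∀ e, 0 ≤ l' e) (hs : ∑ e, l e = ∑ e, l' e)
    (h : ∀ J : E → ℕ, ∑ e, l' e * g (J + Pi.single e 1) ≤ ∑ e, l e * g (J + Pi.single e 1)) :
    ex l' g ≤ ex l g := by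
  refine hasSum_le (fun k => ?_) (ex_sum l' hl' g hg) (ex_sum l hl g hg)
  rw [hs]
  have := ev_cmp g l l' hl hl' h k 1 (by simpa using nnc_pow (nnc_lp hl) 0)
  rw [one_mul, one_mul] at this
  gcongr

def gram {ι : Type} (x : ι → ι → ℝ) : Prop :=
  ∃ (T : Type) (_ : Fintype T) (v : T → ι → ℝ), ∀ i j, x i j = ∑ t, v t i * v t j

lemma gram_mul {ι : Type} {x y : ι → ι → ℝ} (hx : gram x) (hy : gram y) :
    gram (fun i j => x i j * y i j) := by
  obtain ⟨T, hT, v, hv⟩ := hx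
  obtain ⟨S, hS, w, hw⟩ := hy
  refine ⟨T × S, inferInstance, fun p i => v p.1 i * w p.2 i, fun i j => ?_⟩
  simp only [hv, hw]
  rw [Fintype.sum_mul_sum, Fintype.sum_prod_type]
  refine Finset.sum_congr rfl fun a _ => Finset.sum_congr rfl fun b _ => by ring

lemma gram_pow {ι : Type} {x : ι → ι → ℝ} (hx : gram x) (k : ℕ) :
    gram (fun i j => x i j ^ k) := by
  induction k with
  | zero => exact ⟨Unit, inferInstance, fun _ _ => 1, fun i j => by simp⟩
  | succ k ih => simp_rw [pow_succ]; exact gram_mul ih hx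

lemma gram_nonneg {ι : Type} [Fintype ι] {x : ι → ι → ℝ} (hx : gram x) (u : ι → ℝ) :
    0 ≤ ∑ i, ∑ j, u i * u j * x i j := by
  obtain ⟨T, hT, v, hv⟩ := hx
  have : ∑ i, ∑ j, u i * u j * x i j = ∑ t, (∑ i, u i * v t i) ^ 2 := by
    simp_rw [hv, sq, Fintype.sum_mul_sum, Finset.mul_sum]
    calc _ = ∑ i, ∑ t, ∑ j, u i * u j * (v t i * v t j) :=
          Finset.sum_congr rfl fun i _ => Finset.sum_comm
      _ = ∑ t, ∑ i, ∑ j, u i * u j * (v t i * v t j) := Finset.sum_comm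
      _ = _ := Finset.sum_congr rfl fun t _ => Finset.sum_congr rfl fun i _ =>
          Finset.sum_congr rfl fun j _ => by ring
  rw [this]
  exact Finset.sum_nonneg fun t _ => sq_nonneg _

lemma gram_log {ι : Type} [Fintype ι] {x : ι → ι → ℝ} (hx : gram x) (u : ι → ℝ) (a : ℝ)
    (ha0 : 0 ≤ a) (ha1 : a < 1) (h0 : ∀ i j, 0 ≤ x i j) (h1 : ∀ i j, x i j ≤ 1) :
    ∑ i, ∑ j, u i * u j * Real.log (1 - a * x i j) ≤ 0 := by
  have hs : HasSum (fun k : ℕ => ∑ i, ∑ j, u i * u j * ((a * x i j) ^ (k + 1) / (k + 1)))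
      (∑ i, ∑ j, u i * u j * (-Real.log (1 - a * x i j))) := by
    refine hasSum_sum fun i _ => hasSum_sum fun j _ => HasSum.mul_left _ ?_
    apply Real.hasSum_pow_div_log_of_abs_lt_one
    rw [abs_of_nonneg (mul_nonneg ha0 (h0 i j))]
    calc a * x i j ≤ a * 1 := mul_le_mul_of_nonneg_left (h1 i j) ha0
      _ < 1 := by simpa using ha1
  have := hs.nonneg (fun k => by
    have h := gram_nonneg (gram_pow hx (k + 1)) u
    have h2 : ∑ i, ∑ j, u i * u j * ((a * x i j) ^ (k + 1) / (k + 1)) =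
        a ^ (k + 1) / (k + 1) * ∑ i, ∑ j, u i * u j * x i j ^ (k + 1) := by
      simp_rw [Finset.mul_sum]
      refine Finset.sum_congr rfl fun i _ => Finset.sum_congr rfl fun j _ => ?_
      rw [mul_pow]; ring
    rw [h2]; positivity)
  simp only [mul_neg, Finset.sum_neg_distrib] at this
  linarith

noncomputable def gg (q N : ℕ) (β : ℝ) (J : Fin N × Fin N → ℕ) : ℝ :=
  Real.log (potts.Z q N (fun i j => β * (J (i, j) : ℝ)))

lemma p_eq (q N : ℕ) (β c : ℝ) :
    potts.p q N β c = (1 / N) * ex (fun _ : Fin N × Fin N => c / (2 * N)) (gg q N β) := by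
  unfold potts.p potts.pmat potts.E ex
  rw [← (Equiv.curry (Fin N) (Fin N) ℕ).tsum_eq, ← tsum_mul_left]
  refine tsum_congr fun J => ?_
  rw [Fintype.prod_prod_type]
  simp only [Equiv.curry_apply, Function.curry, gg]
  ring

lemma gg_lin (q N : ℕ) (hq : 2 ≤ q) (β : ℝ) (hβ : 0 ≤ β) : lin (gg q N β) := by
  refine ⟨N * Real.log q, β, fun J => ?_⟩
  have hS : 0 ≤ ∑ e, (J e : ℝ) := Finset.sum_nonneg fun _ _ => by positivity
  have hq1 : (1 : ℝ) ≤ q := by exact_mod_cast (by omega : 1 ≤ q)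
  have hlq : 0 ≤ N * Real.log q := mul_nonneg (by positivity) (Real.log_nonneg hq1)
  have hH0 : ∀ σ : Fin N → Fin q, 0 ≤ potts.H q N σ (fun i j => β * (J (i, j) : ℝ)) := fun σ =>
    Finset.sum_nonneg fun i _ => Finset.sum_nonneg fun j _ => by positivity
  have hH1 : ∀ σ : Fin N → Fin q,
      potts.H q N σ (fun i j => β * (J (i, j) : ℝ)) ≤ β * ∑ e, (J e : ℝ) := fun σ => by
    rw [Fintype.sum_prod_type, Finset.mul_sum]
    refine Finset.sum_le_sum fun i _ => ?_
    rw [Finset.mul_sum]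
    refine Finset.sum_le_sum fun j _ => ?_
    have : 0 ≤ β * (J (i, j) : ℝ) := by positivity
    split_ifs <;> simp [this]
  have hZ := Z_pos q N hq (fun i j => β * (J (i, j) : ℝ))
  have hup : gg q N β J ≤ N * Real.log q := by
    rw [gg, ← Real.log_pow]
    refine Real.log_le_log hZ ?_
    calc potts.Z q N (fun i j => β * (J (i, j) : ℝ)) ≤ ∑ σ : Fin N → Fin q, (1 : ℝ) :=
          Finset.sum_le_sum fun σ _ => Real.exp_le_one_iff.2 (by linarith [hH0 σ])
      _ = _ := by simp
  have hlow : -(β * ∑ e, (J e : ℝ)) ≤ gg q N β J := by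
    rw [gg, Real.le_log_iff_exp_le hZ]
    let σ : Fin N → Fin q := fun _ => ⟨0, by omega⟩
    calc Real.exp (-(β * ∑ e, (J e : ℝ)))
        ≤ Real.exp (-potts.H q N σ (fun i j => β * (J (i, j) : ℝ))) :=
          Real.exp_le_exp.2 (neg_le_neg (hH1 σ))
      _ ≤ _ := Finset.single_le_sum (f := fun σ : Fin N → Fin q =>
          Real.exp (-potts.H q N σ (fun i j => β * (J (i, j) : ℝ))))
          (fun _ _ => (Real.exp_pos _).le) (Finset.mem_univ σ)
  have := mul_nonneg hβ hS
  rw [abs_le]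
  constructor <;> linarith

lemma key (q N : ℕ) (hq : 2 ≤ q) (β : ℝ) (hβ : 0 ≤ β) (J : Fin N × Fin N → ℕ) (u : Fin N → ℝ)
    (hu : ∑ i, u i = 0) :
    ∑ i, ∑ j, u i * u j * gg q N β (J + Pi.single (i, j) 1) ≤ 0 := by
  set W : (Fin N → Fin q) → ℝ := fun σ =>
    Real.exp (-potts.H q N σ (fun i j => β * (J (i, j) : ℝ))) with hW
  set Z := potts.Z q N (fun i j => β * (J (i, j) : ℝ)) with hZd
  have hZ : 0 < Z := Z_pos q N hq _
  have hZs : Z = ∑ σ, W σ := rfl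
  have hWp : ∀ σ, 0 < W σ := fun σ => Real.exp_pos _
  set a := 1 - Real.exp (-β) with ha
  set x : Fin N → Fin N → ℝ := fun i j =>
    (∑ σ, W σ * (if σ i = σ j then (1 : ℝ) else 0)) / Z with hx
  have ha0 : 0 ≤ a := by
    have := Real.exp_le_one_iff.2 (by linarith : -β ≤ 0); linarith
  have ha1 : a < 1 := by have := Real.exp_pos (-β); linarith
  have hx0 : ∀ i j, 0 ≤ x i j := fun i j =>
    div_nonneg (Finset.sum_nonneg fun σ _ => mul_nonneg (hWp σ).le (by positivity)) hZ.le
  have hx1 : ∀ i j, x i j ≤ 1 := fun i j => by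
    rw [hx]
    simp only
    rw [div_le_one hZ, hZs]
    refine Finset.sum_le_sum fun σ _ => ?_
    have := (hWp σ).le
    split_ifs <;> simp [this]
  have hgram : gram x := by
    refine ⟨(Fin N → Fin q) × Fin q, inferInstance,
      fun p i => Real.sqrt (W p.1 / Z) * (if p.1 i = p.2 then 1 else 0), fun i j => ?_⟩
    rw [Fintype.sum_prod_type, hx]
    simp only
    rw [Finset.sum_div]
    refine Finset.sum_congr rfl fun σ _ => ?_
    have hs : Real.sqrt (W σ / Z) * Real.sqrt (W σ / Z) = W σ / Z :=
      Real.mul_self_sqrt (div_nonneg (hWp σ).le hZ.le)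
    have : ∀ s : Fin q, Real.sqrt (W σ / Z) * (if σ i = s then 1 else 0) *
        (Real.sqrt (W σ / Z) * (if σ j = s then 1 else 0)) =
        if σ i = s then (W σ / Z) * (if σ j = s then 1 else 0) else 0 := by
      intro s
      rw [mul_mul_mul_comm, hs]
      split_ifs <;> simp
    simp_rw [this]
    rw [Finset.sum_ite_eq]
    simp only [Finset.mem_univ, if_true, eq_comm (a := σ j)]
    ring
  have hg : ∀ i j, gg q N β (J + Pi.single (i, j) 1) = Real.log Z + Real.log (1 - a * x i j) := by
    intro i j
    have hax : 0 < 1 - a * x i j := by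
      have : a * x i j ≤ a * 1 := mul_le_mul_of_nonneg_left (hx1 i j) ha0
      linarith
    rw [← Real.log_mul hZ.ne' hax.ne', gg]
    congr 1
    have hH : ∀ σ : Fin N → Fin q, potts.H q N σ
        (fun i' j' => β * ((J + Pi.single (i, j) 1 : Fin N × Fin N → ℕ) (i', j') : ℝ)) =
        potts.H q N σ (fun i j => β * (J (i, j) : ℝ)) + β * (if σ i = σ j then 1 else 0) := by
      intro σ
      unfold potts.H
      rw [← Fintype.sum_prod_type', ← Fintype.sum_prod_type']
      have h1 : β * (if σ i = σ j then (1 : ℝ) else 0) = ∑ p : Fin N × Fin N,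
          if p = (i, j) then β * (if σ p.1 = σ p.2 then (1 : ℝ) else 0) else 0 := by
        rw [Finset.sum_ite_eq']; simp
      rw [h1, ← Finset.sum_add_distrib]
      refine Finset.sum_congr rfl fun p _ => ?_
      by_cases hp : p = (i, j)
      · subst hp; simp; split_ifs <;> ring
      · simp [hp]
    have hE : ∀ σ : Fin N → Fin q, Real.exp (-potts.H q N σ
        (fun i' j' => β * ((J + Pi.single (i, j) 1 : Fin N × Fin N → ℕ) (i', j') : ℝ))) =
        W σ - a * (W σ * (if σ i = σ j then 1 else 0)) := by
      intro σ
      rw [hH, neg_add, Real.exp_add]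
      change W σ * _ = _
      split_ifs
      · rw [mul_one, mul_one, ha]; ring
      · simp
    rw [potts.Z]
    simp_rw [hE]
    rw [Finset.sum_sub_distrib, ← Finset.mul_sum, ← hZs, hx]
    field_simp
  simp_rw [hg, mul_add, Finset.sum_add_distrib]
  have h1 : ∑ i, ∑ j, u i * u j * Real.log Z = 0 := by
    simp_rw [← Finset.sum_mul, ← Finset.mul_sum, hu]; simp
  have h2 := gram_log hgram u a ha0 ha1 hx0 hx1
  linarith

lemma gg_block (q N₁ N₂ : ℕ) (hq : 2 ≤ q) (β : ℝ)
    (J : Fin (N₁ + N₂) × Fin (N₁ + N₂) → ℕ)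
    (h12 : ∀ i j, J (Fin.castAdd N₂ i, Fin.natAdd N₁ j) = 0)
    (h21 : ∀ i j, J (Fin.natAdd N₁ i, Fin.castAdd N₂ j) = 0) :
    gg q (N₁ + N₂) β J =
      gg q N₁ β (fun p => J (Prod.map (Fin.castAdd N₂) (Fin.castAdd N₂) p)) +
      gg q N₂ β (fun p => J (Prod.map (Fin.natAdd N₁) (Fin.natAdd N₁) p)) := by
  unfold gg
  rw [← Real.log_mul (Z_pos q _ hq _).ne' (Z_pos q _ hq _).ne']
  congr 1
  unfold potts.Z
  rw [Fintype.sum_mul_sum, ← Fintype.sum_prod_type', ← (Fin.appendEquiv N₁ N₂).sum_comp]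
  refine Finset.sum_congr rfl fun σ _ => ?_
  rw [← Real.exp_add]
  congr 1
  unfold potts.H
  simp [Fin.sum_univ_add, h12, h21]
  ring

lemma final (q : ℕ) (hq : 2 ≤ q) (β c : ℝ) (hβ : 0 ≤ β) (hc : 0 ≤ c)
    (N₁ N₂ : ℕ) (h₁ : 0 < N₁) (h₂ : 0 < N₂) :
    ex (fun _ : Fin N₁ × Fin N₁ => c / (2 * N₁)) (gg q N₁ β) +
    ex (fun _ : Fin N₂ × Fin N₂ => c / (2 * N₂)) (gg q N₂ β) ≤
    ex (fun _ : Fin (N₁ + N₂) × Fin (N₁ + N₂) => c / (2 * ((N₁ + N₂ : ℕ) : ℝ)))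
      (gg q (N₁ + N₂) β) := by
  have p1 : (0 : ℝ) < N₁ := by exact_mod_cast h₁
  have p2 : (0 : ℝ) < N₂ := by exact_mod_cast h₂
  set u : Fin (N₁ + N₂) → ℝ := Fin.append (fun _ => 1 / (N₁ : ℝ)) (fun _ => -1 / (N₂ : ℝ)) with hu
  set κ : ℝ := c / 2 * (N₁ * N₂ / (N₁ + N₂)) with hκ
  have hκ0 : 0 ≤ κ := by positivity
  set l : Fin (N₁ + N₂) × Fin (N₁ + N₂) → ℝ := fun _ => c / (2 * ((N₁ + N₂ : ℕ) : ℝ)) with hl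
  set l' : Fin (N₁ + N₂) × Fin (N₁ + N₂) → ℝ := fun p => l p + κ * (u p.1 * u p.2) with hl'
  have hus : ∑ i, u i = 0 := by
    rw [Fin.sum_univ_add]; simp [hu]; field_simp; ring
  have l11 : ∀ i j, l' (Fin.castAdd N₂ i, Fin.castAdd N₂ j) = c / (2 * N₁) := by
    intro i j; simp [hl', hl, hu, hκ]; field_simp
  have l22 : ∀ i j, l' (Fin.natAdd N₁ i, Fin.natAdd N₁ j) = c / (2 * N₂) := by
    intro i j; simp [hl', hl, hu, hκ]; field_simp; ring
  have l12 : ∀ i j, l' (Fin.castAdd N₂ i, Fin.natAdd N₁ j) = 0 := by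
    intro i j; simp [hl', hl, hu, hκ]; field_simp; ring
  have l21 : ∀ i j, l' (Fin.natAdd N₁ i, Fin.castAdd N₂ j) = 0 := by
    intro i j; simp [hl', hl, hu, hκ]; field_simp; ring
  have hl0 : ∀ e, 0 ≤ l e := fun e => by simp only [hl]; positivity
  have hl0' : ∀ e, 0 ≤ l' e := by
    rintro ⟨i, j⟩
    refine Fin.addCases (fun i => ?_) (fun i => ?_) i <;>
    refine Fin.addCases (fun j => ?_) (fun j => ?_) j
    · rw [l11]; positivity
    · rw [l12]
    · rw [l21]
    · rw [l22]; positivity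
  have huu : ∑ p : Fin (N₁ + N₂) × Fin (N₁ + N₂), u p.1 * u p.2 = 0 := by
    rw [Fintype.sum_prod_type]
    simp only [← Finset.mul_sum, hus, mul_zero, Finset.sum_const_zero]
  have hcmp : ex l' (gg q (N₁ + N₂) β) ≤ ex l (gg q (N₁ + N₂) β) := by
    refine ex_cmp _ (gg_lin q _ hq β hβ) l l' hl0 hl0' ?_ fun J => ?_
    · simp only [hl', Finset.sum_add_distrib, ← Finset.mul_sum, huu, mul_zero, add_zero]
    · have hk := key q (N₁ + N₂) hq β hβ J u hus
      have hk2 : ∑ p : Fin (N₁ + N₂) × Fin (N₁ + N₂),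
          u p.1 * u p.2 * gg q (N₁ + N₂) β (J + Pi.single p 1) ≤ 0 := by
        rw [Fintype.sum_prod_type]
        convert hk
      simp only [hl', add_mul, Finset.sum_add_distrib, mul_assoc κ, ← Finset.mul_sum]
      have := mul_nonpos_of_nonneg_of_nonpos hκ0 hk2
      linarith
  refine le_trans (le_of_eq ?_) hcmp
  have m1 := ex_marg l' hl0' (Prod.map (Fin.castAdd N₂) (Fin.castAdd N₂))
    (Function.Injective.prodMap (Fin.castAdd_injective _ _) (Fin.castAdd_injective _ _))
    (gg q N₁ β) (gg_lin q _ hq β hβ)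
  have m2 := ex_marg l' hl0' (Prod.map (Fin.natAdd N₁) (Fin.natAdd N₁))
    (Function.Injective.prodMap (Fin.natAdd_injective _ _) (Fin.natAdd_injective _ _))
    (gg q N₂ β) (gg_lin q _ hq β hβ)
  have e1 : (fun _ : Fin N₁ × Fin N₁ => c / (2 * (N₁ : ℝ))) =
      fun a => l' (Prod.map (Fin.castAdd N₂) (Fin.castAdd N₂) a) := by
    ext p; exact (l11 p.1 p.2).symm
  have e2 : (fun _ : Fin N₂ × Fin N₂ => c / (2 * (N₂ : ℝ))) =
      fun a => l' (Prod.map (Fin.natAdd N₁) (Fin.natAdd N₁) a) := by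
    ext p; exact (l22 p.1 p.2).symm
  rw [e1, e2, ← m1.1, ← m2.1, ← ex_add l' hl0' m1.2 m2.2]
  unfold ex
  refine tsum_congr fun J => ?_
  by_cases hJ : ∏ e, poissonPMF (l' e) (J e) = 0
  · rw [hJ, zero_mul, zero_mul]
  · have hz : ∀ e, l' e = 0 → J e = 0 := by
      intro e he
      by_contra hne
      exact hJ (Finset.prod_eq_zero (Finset.mem_univ e) (by simp [poissonPMF, he, hne]))
    rw [gg_block q N₁ N₂ hq β J (fun i j => hz _ (l12 i j)) (fun i j => hz _ (l21 i j))]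

/-- superadditivity of the quenched pressure. -/
theorem statement1 (q : ℕ) (hq : 2 ≤ q) (β c : ℝ) (hβ : 0 ≤ β) (hc : 0 ≤ c)
    (N₁ N₂ : ℕ) (h₁ : 0 < N₁) (h₂ : 0 < N₂) :
    potts.p q (N₁ + N₂) β c ≥
      ((N₁ : ℝ) / ((N₁ : ℝ) + N₂)) * potts.p q N₁ β c +
        ((N₂ : ℝ) / ((N₁ : ℝ) + N₂)) * potts.p q N₂ β c := by
  rw [p_eq, p_eq, p_eq]
  have h := final q hq β c hβ hc N₁ N₂ h₁ h₂
  have p1 : (0 : ℝ) < N₁ := by exact_mod_cast h₁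
  have p2 : (0 : ℝ) < N₂ := by exact_mod_cast h₂
  set A := ex (fun _ : Fin N₁ × Fin N₁ => c / (2 * (N₁ : ℝ))) (gg q N₁ β)
  set B := ex (fun _ : Fin N₂ × Fin N₂ => c / (2 * (N₂ : ℝ))) (gg q N₂ β)
  have e : (N₁ : ℝ) / (N₁ + N₂) * (1 / N₁ * A) + (N₂ : ℝ) / (N₁ + N₂) * (1 / N₂ * B) =
      1 / ((N₁ + N₂ : ℕ) : ℝ) * (A + B) := by
    push_cast; field_simp
  rw [e]
  exact mul_le_mul_of_nonneg_left h (by positivity)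
end

section
/- Let (x_N)_{N∈ℕ} be a real sequence satisfying (M+N) x_{M+N} ≥ M x_M + N x_N for all M, N ∈ ℕ. Then (with values in ℝ ∪ {+∞}) liminf_{N→∞} x_N = limsup_{N→∞} x_N = sup_{N∈ℕ} x_N = limsup_{N→∞} liminf_{M→∞} ((M+N) x_{M+N} − M x_M)/N. -/
open Filter

theorem aux_ev (x : ℕ → ℝ)
    (hsuper : ∀ M N : ℕ, 0 < M → 0 < N →
      ((M : ℝ) + N) * x (M + N) ≥ (M : ℝ) * x M + (N : ℝ) * x N)
    (n : ℕ) (hn : n ≠ 0) (c : ℝ) (hc : c < x n) : ∀ᶠ p in atTop, c < x p := by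
  have hs : Subadditive (fun n : ℕ => -((n : ℝ) * x n)) := by
    intro m n
    rcases Nat.eq_zero_or_pos m with rfl | hm
    · simp
    rcases Nat.eq_zero_or_pos n with rfl | hn
    · simp
    have := hsuper m n hm hn
    push_cast
    linarith
  have hq : ∀ p : ℕ, p ≠ 0 → -((p : ℝ) * x p) / p = - x p := by
    intro p hp
    have : (p : ℝ) ≠ 0 := by exact_mod_cast hp
    field_simp
  have h := hs.eventually_div_lt_of_div_lt (L := -c) hn (by
    show -((n : ℝ) * x n) / n < -c
    rw [hq n hn]; linarith)
  filter_upwards [h, eventually_ge_atTop 1] with p hp h1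
  rw [hq p (by omega)] at hp
  linarith

theorem aux_le (x : ℕ → ℝ) (S c : ℝ) (hS : ∀ n : ℕ, x (n + 1) ≤ S) (hc : S < c)
    (N : ℕ) (hN : 0 < N)
    (h : ∀ᶠ M : ℕ in atTop, c < (((M : ℝ) + N) * x (M + N) - (M : ℝ) * x M) / N) : False := by
  obtain ⟨A, hA⟩ := eventually_atTop.1 h
  have hN' : (1 : ℝ) ≤ N := by exact_mod_cast hN
  have key : ∀ k : ℕ, ((A : ℝ) + k * N) * x (A + k * N) ≥ A * x A + k * N * c := by
    intro k
    induction k with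
    | zero => simp
    | succ k ih =>
      have h1 := hA (A + k * N) (by omega)
      rw [lt_div_iff₀ (by linarith)] at h1
      have e : A + (k + 1) * N = A + k * N + N := by ring
      rw [e]
      push_cast at h1 ⊢
      linarith
  obtain ⟨k, hk⟩ := exists_nat_gt ((A * (S - x A)) / (c - S))
  rw [div_lt_iff₀ (by linarith)] at hk
  have hk' := key (k + 1)
  have h2 : x (A + (k + 1) * N) ≤ S := by
    have := hS (A + (k + 1) * N - 1)
    rwa [Nat.sub_add_cancel (by nlinarith)] at this
  have h3 : ((A : ℝ) + (k + 1 : ℕ) * N) * x (A + (k + 1) * N)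
      ≤ ((A : ℝ) + (k + 1 : ℕ) * N) * S := mul_le_mul_of_nonneg_left h2 (by positivity)
  push_cast at h3 hk'
  have h4 : ((k : ℝ) + 1) * (c - S) ≤ ((k : ℝ) + 1) * (c - S) * N :=
    le_mul_of_one_le_right (mul_nonneg (by positivity) (by linarith)) hN'
  nlinarith

/-- for a superadditive sequence, the liminf, limsup and supremum
all coincide (in `ℝ ∪ {+∞}`), and are also equal to
`limsup_N liminf_M ((M+N) x_{M+N} - M x_M)/N`. -/
theorem statement2 (x : ℕ → ℝ)
    (hsuper : ∀ M N : ℕ, 0 < M → 0 < N →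
      ((M : ℝ) + N) * x (M + N) ≥ (M : ℝ) * x M + (N : ℝ) * x N) :
    Filter.liminf (fun N => (x N : EReal)) Filter.atTop
        = Filter.limsup (fun N => (x N : EReal)) Filter.atTop ∧
    Filter.limsup (fun N => (x N : EReal)) Filter.atTop
        = ⨆ N : ℕ, (x (N + 1) : EReal) ∧
    (⨆ N : ℕ, (x (N + 1) : EReal)) =
      Filter.limsup (fun N : ℕ =>
        Filter.liminf (fun M : ℕ =>
          (((((M : ℝ) + N) * x (M + N) - (M : ℝ) * x M) / N : ℝ) : EReal))
          Filter.atTop) Filter.atTop := by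
  set S : EReal := ⨆ N : ℕ, (x (N + 1) : EReal) with hSdef
  have hxS : ∀ n : ℕ, 0 < n → (x n : EReal) ≤ S := by
    intro n hn
    obtain ⟨m, rfl⟩ : ∃ m, n = m + 1 := ⟨n - 1, by omega⟩
    exact le_iSup (fun N : ℕ => (x (N + 1) : EReal)) m
  have h1 : S ≤ liminf (fun N => (x N : EReal)) atTop := by
    by_contra hlt
    rw [not_le] at hlt
    obtain ⟨c, hc1, hc2⟩ := EReal.lt_iff_exists_real_btwn.1 hlt
    obtain ⟨n, hn⟩ := lt_iSup_iff.1 hc2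
    have hev := aux_ev x hsuper (n + 1) (by omega) c (EReal.coe_lt_coe_iff.1 hn)
    refine absurd hc1 (not_lt.2 (le_liminf_of_le (h := ?_)))
    filter_upwards [hev] with p hp
    exact EReal.coe_le_coe_iff.2 hp.le
  have h2 : liminf (fun N => (x N : EReal)) atTop ≤ limsup (fun N => (x N : EReal)) atTop :=
    liminf_le_limsup
  have h3 : limsup (fun N => (x N : EReal)) atTop ≤ S := by
    refine limsup_le_of_le (h := ?_)
    filter_upwards [eventually_gt_atTop 0] with n hn using hxS n hn
  refine ⟨le_antisymm h2 (h3.trans h1), le_antisymm h3 (h1.trans h2), le_antisymm ?_ ?_⟩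
  · refine (h1.trans h2).trans (limsup_le_limsup ?_)
    filter_upwards [eventually_gt_atTop 0] with N hN
    refine le_liminf_of_le (h := ?_)
    filter_upwards [eventually_gt_atTop 0] with M hM
    have hN' : (0 : ℝ) < N := by exact_mod_cast hN
    rw [EReal.coe_le_coe_iff, le_div_iff₀ hN']
    linarith [hsuper M N hM hN]
  · refine limsup_le_of_le (h := ?_)
    filter_upwards [eventually_gt_atTop 0] with N hN
    by_contra hlt
    rw [not_le] at hlt
    obtain ⟨c, hc1, hc2⟩ := EReal.lt_iff_exists_real_btwn.1 hlt
    have hev := eventually_lt_of_lt_liminf hc2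
    have hbot : S ≠ ⊥ := fun h => by
      have := hxS 1 one_pos
      rw [h] at this
      exact absurd this (not_le.2 (EReal.bot_lt_coe _))
    have hcoe := EReal.coe_toReal (ne_top_of_lt hc1) hbot
    refine aux_le x S.toReal c ?_ ?_ N hN ?_
    · intro n
      rw [← EReal.coe_le_coe_iff, hcoe]
      exact hxS _ n.succ_pos
    · rwa [← EReal.coe_lt_coe_iff, hcoe]
    · filter_upwards [hev] with M hM
      exact EReal.coe_lt_coe_iff.1 hM
end

section
/- For every β ≥ 0, c ≥ 0 and N ∈ ℕ, 𝒫(β,c) − p_N(β,c) = (1/2) Σ_{R=1}^∞ ((1−e^{−β})^R / R) Σ_{s∈[q]^R} ∫_0^c ⟨⟨ (ρ_{Σ_R}(s) − q^{−R})² ⟩⟩_{N,β,c'} dc'. -/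
open MeasureTheory Filter

/-- Boltzmann-Gibbs measure `ω_{N,J}(σ)`. -/
noncomputable def potts.omega (q N : ℕ) (J : Fin N → Fin N → ℝ) (σ : Fin N → Fin q) : ℝ :=
  Real.exp (- potts.H q N σ J) / potts.Z q N J

/-- Quenched Gibbs average `⟨⟨F⟩⟩_{N,β,c}` of a function of `R` replicas. -/
noncomputable def potts.replicaQuenched (q N R : ℕ) (β c : ℝ)
    (F : (Fin R → Fin N → Fin q) → ℝ) : ℝ :=
  potts.E N (fun _ _ => c) (fun J =>
    ∑ S : Fin R → Fin N → Fin q, F S *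
      ∏ r, potts.omega q N (fun a b => β * (J a b : ℝ)) (S r))

/-- The `R`-replica empirical measure `ρ_{Σ_R}(s)`. -/
noncomputable def potts.rho (q N R : ℕ) (S : Fin R → Fin N → Fin q)
    (s : Fin R → Fin q) : ℝ :=
  (1 / N) * ∑ i, ∏ r, (if S r i = s r then (1 : ℝ) else 0)



namespace PB
variable {ι : Type*} [Fintype ι] [DecidableEq ι]

noncomputable def EE (ι : Type*) [Fintype ι] (l : ℝ) (g : (ι → ℕ) → ℝ) : ℝ :=
  ∑' J : ι → ℕ, (∏ i, poissonPMF l (J i)) * g J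

noncomputable def w (J : ι → ℕ) : ℝ := ∏ i, ((Nat.factorial (J i) : ℝ))⁻¹

lemma w_nonneg (J : ι → ℕ) : 0 ≤ w J := by
  unfold w; positivity

lemma prod_eq (l : ℝ) (J : ι → ℕ) : (∏ i, poissonPMF l (J i)) =
    Real.exp (-(Fintype.card ι * l)) * (l ^ (∑ i, J i) * w J) := by
  unfold w poissonPMF
  simp only [div_eq_mul_inv, Finset.prod_mul_distrib, Finset.prod_pow_eq_pow_sum]
  rw [Finset.prod_const, Finset.card_univ, ← Real.exp_nat_mul]
  rw [mul_assoc]; congr 2; ring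

lemma summ (L : ℝ) (hL : 0 ≤ L) : Summable (fun J : ι → ℕ => L ^ (∑ i, J i) * w J) := by
  apply summable_of_sum_le (c := ∏ _i : ι, Real.exp L)
  · intro J; exact mul_nonneg (by positivity) (w_nonneg J)
  · intro u
    obtain ⟨K, hK⟩ : ∃ K : ℕ, ∀ J ∈ u, ∀ i, J i < K := by
      refine ⟨(∑ J ∈ u, ∑ i, J i) + 1, fun J hJ i => ?_⟩
      have h1 : J i ≤ ∑ i, J i := Finset.single_le_sum (f := J) (fun _ _ => Nat.zero_le _) (Finset.mem_univ i)
      have h2 : ∑ i, J i ≤ ∑ J ∈ u, ∑ i, J i :=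
        Finset.single_le_sum (f := fun J : ι → ℕ => ∑ i, J i) (fun _ _ => Nat.zero_le _) hJ
      omega
    calc ∑ J ∈ u, L ^ (∑ i, J i) * w J
        ≤ ∑ J ∈ Fintype.piFinset (fun _ : ι => Finset.range K), L ^ (∑ i, J i) * w J := by
          apply Finset.sum_le_sum_of_subset_of_nonneg
          · intro J hJ
            simp only [Fintype.mem_piFinset, Finset.mem_range]
            exact hK J hJ
          · intro J _ _; exact mul_nonneg (by positivity) (w_nonneg J)
      _ = ∏ _i : ι, ∑ k ∈ Finset.range K, L ^ k / (Nat.factorial k) := by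
          rw [Finset.prod_univ_sum]
          apply Finset.sum_congr rfl
          intro J _
          simp only [w, div_eq_mul_inv, Finset.prod_mul_distrib, Finset.prod_pow_eq_pow_sum]
      _ ≤ _ := by
          apply Finset.prod_le_prod
          · intro i _; positivity
          · intro i _; exact Real.sum_le_exp_of_nonneg hL K

lemma summg (l : ℝ) (g : (ι → ℕ) → ℝ) (A K : ℝ) (hK : 1 ≤ K)
    (hg : ∀ J, |g J| ≤ A * K ^ (∑ i, J i)) :
    Summable (fun J : ι → ℕ => l ^ (∑ i, J i) * w J * g J) := by
  refine Summable.of_norm_bounded ((summ (|l| * K) (by positivity)).mul_left A) ?_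
  intro J
  rw [norm_mul, norm_mul, norm_pow, Real.norm_eq_abs, Real.norm_eq_abs, Real.norm_eq_abs,
    abs_of_nonneg (w_nonneg J), mul_pow]
  have := mul_le_mul_of_nonneg_left (hg J) (mul_nonneg (pow_nonneg (abs_nonneg l) (∑ i, J i)) (w_nonneg J))
  calc _ ≤ _ := this
    _ = _ := by ring

lemma summE (l : ℝ) (g : (ι → ℕ) → ℝ) (A K : ℝ) (hK : 1 ≤ K)
    (hg : ∀ J, |g J| ≤ A * K ^ (∑ i, J i)) :
    Summable (fun J : ι → ℕ => (∏ i, poissonPMF l (J i)) * g J) := by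
  simp only [prod_eq]
  refine ((summg l g A K hK hg).mul_left (Real.exp (-(Fintype.card ι * l)))).congr ?_
  intro J; ring

lemma EE_eq (l : ℝ) (g : (ι → ℕ) → ℝ) :
    EE ι l g = Real.exp (-(Fintype.card ι * l)) * ∑' J : ι → ℕ, l ^ (∑ i, J i) * w J * g J := by
  unfold EE
  rw [← tsum_mul_left]
  apply tsum_congr; intro J; rw [prod_eq]; ring

lemma w_succ (J : ι → ℕ) (e : ι) :
    (((J + Pi.single e 1 : ι → ℕ) e : ℕ) : ℝ) * w (J + Pi.single e 1) = w J := by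
  unfold w
  rw [← Finset.mul_prod_erase Finset.univ _ (Finset.mem_univ e),
    ← Finset.mul_prod_erase Finset.univ (fun i => ((Nat.factorial (J i) : ℝ))⁻¹) (Finset.mem_univ e)]
  have : ∏ x ∈ Finset.univ.erase e, ((Nat.factorial ((J + Pi.single e 1 : ι → ℕ) x) : ℝ))⁻¹ =
      ∏ x ∈ Finset.univ.erase e, ((Nat.factorial (J x) : ℝ))⁻¹ := by
    apply Finset.prod_congr rfl
    intro x hx
    simp [Pi.single_eq_of_ne (Finset.ne_of_mem_erase hx)]
  rw [this, ← mul_assoc]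
  congr 1
  simp only [Pi.add_apply, Pi.single_eq_same, Nat.factorial_succ]
  push_cast
  have : (J e : ℝ) + 1 ≠ 0 := by positivity
  field_simp

lemma sum_succ (J : ι → ℕ) (e : ι) : ∑ i, (J + Pi.single e 1 : ι → ℕ) i = ∑ i, J i + 1 := by
  simp [Finset.sum_add_distrib]

lemma reindex (l : ℝ) (g : (ι → ℕ) → ℝ) (e : ι) :
    ∑' J : ι → ℕ, (J e : ℝ) * l ^ (∑ i, J i - 1) * w J * g J =
      ∑' J : ι → ℕ, l ^ (∑ i, J i) * w J * g (J + Pi.single e 1) := by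
  have hinj : Function.Injective (fun J : ι → ℕ => J + Pi.single e 1) :=
    fun a b h => by simpa using h
  rw [← hinj.tsum_eq]
  · apply tsum_congr; intro J
    rw [sum_succ, Nat.add_sub_cancel, ← w_succ J e]; ring
  · intro J hJ
    have h0 : J e ≠ 0 := by
      intro h; apply hJ; simp [h]
    refine ⟨J - Pi.single e 1, ?_⟩
    ext i
    by_cases hi : i = e
    · subst hi; simp; omega
    · simp [Pi.single_eq_of_ne hi]

lemma deriv_S (l : ℝ) (g : (ι → ℕ) → ℝ) (A K : ℝ) (hK : 1 ≤ K)
    (hg : ∀ J, |g J| ≤ A * K ^ (∑ i, J i)) :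
    HasDerivAt (fun l => ∑' J : ι → ℕ, l ^ (∑ i, J i) * w J * g J)
      (∑ e, ∑' J : ι → ℕ, l ^ (∑ i, J i) * w J * g (J + Pi.single e 1)) l := by
  set L : ℝ := |l| + 1 with hLdef
  have hL : 1 ≤ L := by have := abs_nonneg l; linarith
  have hb : ∀ (n : ℕ) (y : ℝ), |y| ≤ L → |(n : ℝ) * y ^ (n - 1)| ≤ (2 * L) ^ n := by
    intro n y hy
    rw [abs_mul, abs_pow, mul_pow, Nat.abs_cast]
    have h1 : (n : ℝ) ≤ 2 ^ n := by exact_mod_cast (Nat.lt_two_pow_self (n := n)).le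
    have h2 : |y| ^ (n - 1) ≤ L ^ (n - 1) := pow_le_pow_left₀ (abs_nonneg _) hy _
    have h3 : L ^ (n - 1) ≤ L ^ n := pow_le_pow_right₀ hL (Nat.sub_le _ _)
    exact mul_le_mul h1 (h2.trans h3) (by positivity) (by positivity)
  have hbound : ∀ (J : ι → ℕ) (k : ℕ) (y : ℝ), |y| ≤ L → k ≤ ∑ i, J i →
      ‖(k : ℝ) * y ^ (∑ i, J i - 1) * w J * g J‖ ≤ A * ((2 * L * K) ^ (∑ i, J i) * w J) := by
    intro J k y hy hk
    have h1 := hb (∑ i, J i) y hy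
    have h2 : |(k : ℝ) * y ^ (∑ i, J i - 1)| ≤ |((∑ i, J i : ℕ) : ℝ) * y ^ (∑ i, J i - 1)| := by
      rw [abs_mul, abs_mul, Nat.abs_cast, Nat.abs_cast]
      exact mul_le_mul_of_nonneg_right (by exact_mod_cast hk) (abs_nonneg _)
    have h3 := mul_le_mul (h2.trans h1) (hg J) (abs_nonneg _) (by positivity)
    rw [norm_mul, norm_mul, Real.norm_eq_abs, Real.norm_eq_abs, Real.norm_eq_abs,
      abs_of_nonneg (w_nonneg J)]
    calc _ = (|(k : ℝ) * y ^ (∑ i, J i - 1)| * |g J|) * w J := by ring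
      _ ≤ _ := mul_le_mul_of_nonneg_right h3 (w_nonneg J)
      _ = _ := by rw [mul_pow (2 * L) K]; ring
  have hu : Summable (fun J : ι → ℕ => A * ((2 * L * K) ^ (∑ i, J i) * w J)) :=
    (summ (2 * L * K) (by positivity)).mul_left A
  have hlL : |l| < L := by linarith
  have key := hasDerivAt_tsum_of_isPreconnected (𝕜 := ℝ) hu (t := Set.Ioo (-L) L) isOpen_Ioo
    isPreconnected_Ioo (g := fun (J : ι → ℕ) (l : ℝ) => l ^ (∑ i, J i) * w J * g J)
    (g' := fun (J : ι → ℕ) (l : ℝ) => ((∑ i, J i : ℕ) : ℝ) * l ^ (∑ i, J i - 1) * w J * g J)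
    (y₀ := 0) (y := l)
    (fun J y _ => ((hasDerivAt_pow (∑ i, J i) y).mul_const _).mul_const _)
    (fun J y hy => hbound J _ y (abs_le.2 ⟨hy.1.le, hy.2.le⟩) le_rfl)
    ⟨by linarith, by linarith⟩ (summg 0 g A K hK hg) (abs_lt.1 hlL)
  refine key.congr_deriv ?_
  simp only [← reindex]
  rw [← Summable.tsum_finsetSum]
  · apply tsum_congr; intro J
    push_cast
    simp only [Finset.sum_mul]
  · intro e _
    refine Summable.of_norm_bounded hu (fun J => hbound J _ l hlL.le ?_)
    exact Finset.single_le_sum (f := J) (fun _ _ => Nat.zero_le _) (Finset.mem_univ e)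

lemma deriv_E (l : ℝ) (g : (ι → ℕ) → ℝ) (A K : ℝ) (hK : 1 ≤ K)
    (hg : ∀ J, |g J| ≤ A * K ^ (∑ i, J i)) :
    HasDerivAt (fun l => EE ι l g)
      (∑ e, (EE ι l (fun J => g (J + Pi.single e 1)) - EE ι l g)) l := by
  have h1 : HasDerivAt (fun l : ℝ => Real.exp (-(Fintype.card ι * l)))
      (Real.exp (-(Fintype.card ι * l)) * (-(Fintype.card ι * 1))) l :=
    (((hasDerivAt_id l).const_mul (Fintype.card ι : ℝ)).neg).exp
  have h2 := h1.mul (deriv_S l g A K hK hg)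
  have : (fun l => EE ι l g) = (fun l : ℝ => Real.exp (-(Fintype.card ι * l))) *
    (fun l => ∑' J : ι → ℕ, l ^ (∑ i, J i) * w J * g J) := by
    funext l; rw [EE_eq]; rfl
  rw [this]
  refine h2.congr_deriv ?_
  rw [Finset.sum_sub_distrib, Finset.sum_const, Finset.card_univ, nsmul_eq_mul]
  simp only [EE_eq, ← Finset.mul_sum]
  ring

lemma cont_E (g : (ι → ℕ) → ℝ) (A : ℝ) (hg : ∀ J, |g J| ≤ A) :
    Continuous (fun l => EE ι l g) :=
  continuous_iff_continuousAt.2 fun l =>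
    (deriv_E l g A 1 le_rfl (by simpa using hg)).continuousAt

lemma E_zero (g : (ι → ℕ) → ℝ) : EE ι 0 g = g 0 := by
  rw [EE_eq, tsum_eq_single 0]
  · simp [w]
  · intro J hJ
    have : ∑ i, J i ≠ 0 := by
      intro h; apply hJ; ext i
      simpa using (Finset.sum_eq_zero_iff.1 h) i (Finset.mem_univ i)
    simp [this]

lemma E_const (l a : ℝ) : EE ι l (fun _ => a) = a := by
  have h := is_const_of_deriv_eq_zero (f := fun l => EE ι l (fun _ => a))
    (fun l => (deriv_E l (fun _ => a) |a| 1 le_rfl (by simp)).differentiableAt)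
    (fun l => by rw [(deriv_E l (fun _ => a) |a| 1 le_rfl (by simp)).deriv]; simp) l 0
  rw [h, E_zero]

lemma P_nonneg (l : ℝ) (hl : 0 ≤ l) (J : ι → ℕ) : 0 ≤ ∏ i, poissonPMF l (J i) := by
  rw [prod_eq]; have := w_nonneg J; positivity

lemma E_abs (l : ℝ) (hl : 0 ≤ l) (g : (ι → ℕ) → ℝ) (A : ℝ) (hg : ∀ J, |g J| ≤ A) :
    |EE ι l g| ≤ A := by
  have hs := summE l (fun _ : ι → ℕ => A) |A| 1 le_rfl (by simp)
  have h := tsum_of_norm_bounded hs.hasSum (f := fun J : ι → ℕ => (∏ i, poissonPMF l (J i)) * g J)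
    (fun J => by
      rw [norm_mul, Real.norm_eq_abs, Real.norm_eq_abs, abs_of_nonneg (P_nonneg l hl J)]
      exact mul_le_mul_of_nonneg_left (hg J) (P_nonneg l hl J))
  have h2 := E_const (ι := ι) l A
  unfold EE at h2 ⊢
  rw [h2] at h
  exact h

lemma E_sum {κ : Type*} (s : Finset κ) (l : ℝ) (g : κ → (ι → ℕ) → ℝ) (A : ℝ)
    (hg : ∀ k J, |g k J| ≤ A) :
    EE ι l (fun J => ∑ k ∈ s, g k J) = ∑ k ∈ s, EE ι l (g k) := by
  unfold EE
  simp only [Finset.mul_sum]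
  exact Summable.tsum_finsetSum (fun k _ => summE l (g k) A 1 le_rfl (by simpa using hg k))

lemma E_smul (l a : ℝ) (g : (ι → ℕ) → ℝ) :
    EE ι l (fun J => a * g J) = a * EE ι l g := by
  unfold EE
  rw [← tsum_mul_left]
  apply tsum_congr; intro J; ring

lemma E_sub (l : ℝ) (g h : (ι → ℕ) → ℝ) (A K : ℝ) (hK : 1 ≤ K)
    (hg : ∀ J, |g J| ≤ A * K ^ (∑ i, J i)) (hh : ∀ J, |h J| ≤ A * K ^ (∑ i, J i)) :
    EE ι l (fun J => g J - h J) = EE ι l g - EE ι l h := by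
  unfold EE
  rw [← (summE l g A K hK hg).tsum_sub (summE l h A K hK hh)]
  apply tsum_congr; intro J; ring

lemma E_log (l x : ℝ) (hl : 0 ≤ l) (hx0 : 0 ≤ x) (hx1 : x < 1) (D : (ι → ℕ) → ℝ)
    (hD0 : ∀ J, 0 ≤ D J) (hD1 : ∀ J, D J ≤ 1) :
    HasSum (fun R : ℕ => x ^ (R + 1) / ((R : ℝ) + 1) * EE ι l (fun J => D J ^ (R + 1)))
      (- EE ι l (fun J => Real.log (1 - x * D J))) := by
  have hlog : ∀ J, HasSum (fun R : ℕ => x ^ (R + 1) / ((R : ℝ) + 1) * D J ^ (R + 1))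
      (- Real.log (1 - x * D J)) := by
    intro J
    have h0 : 0 ≤ x * D J := mul_nonneg hx0 (hD0 J)
    have h1 : x * D J < 1 := by nlinarith [hD0 J, hD1 J]
    have := Real.hasSum_pow_div_log_of_abs_lt_one (x := x * D J) (by rw [abs_of_nonneg h0]; exact h1)
    convert this using 2 with R
    rw [mul_pow]; ring
  have hDp : ∀ J (R : ℕ), |D J ^ (R + 1)| ≤ 1 := by
    intro J R
    rw [abs_of_nonneg (pow_nonneg (hD0 J) _)]
    exact pow_le_one₀ (hD0 J) (hD1 J)
  have hxs : Summable (fun R : ℕ => x ^ (R + 1)) :=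
    (summable_nat_add_iff 1).2 (summable_geometric_of_lt_one hx0 hx1)
  have hxR : ∀ R : ℕ, x ^ (R + 1) / ((R : ℝ) + 1) ≤ x ^ (R + 1) := by
    intro R
    apply div_le_self (by positivity)
    have : (0 : ℝ) ≤ R := by positivity
    linarith
  have hP : Summable (fun J : ι → ℕ => ∏ i, poissonPMF l (J i)) := by
    simpa using summE l (fun _ : ι → ℕ => (1 : ℝ)) 1 1 le_rfl (by simp)
  have hprod := hxs.mul_of_nonneg hP (fun R => by positivity) (fun J => P_nonneg l hl J)
  have hS : Summable (Function.uncurry (fun (R : ℕ) (J : ι → ℕ) =>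
      (∏ i, poissonPMF l (J i)) * (x ^ (R + 1) / ((R : ℝ) + 1) * D J ^ (R + 1)))) := by
    refine Summable.of_norm_bounded hprod ?_
    rintro ⟨R, J⟩
    simp only [Function.uncurry]
    rw [norm_mul, norm_mul, Real.norm_eq_abs, Real.norm_eq_abs, Real.norm_eq_abs,
      abs_of_nonneg (P_nonneg l hl J), abs_of_nonneg (by positivity : 0 ≤ x ^ (R + 1) / ((R : ℝ) + 1)),
      mul_comm]
    apply mul_le_mul_of_nonneg_right _ (P_nonneg l hl J)
    calc _ ≤ x ^ (R + 1) * 1 := mul_le_mul (hxR R) (hDp J R) (abs_nonneg _) (by positivity)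
      _ = _ := mul_one _
  have heq : - EE ι l (fun J => Real.log (1 - x * D J)) =
      ∑' R : ℕ, x ^ (R + 1) / ((R : ℝ) + 1) * EE ι l (fun J => D J ^ (R + 1)) := by
    simp only [← E_smul]
    unfold EE
    beta_reduce
    rw [← hS.tsum_comm, ← tsum_neg]
    apply tsum_congr; intro J
    rw [tsum_mul_left, (hlog J).tsum_eq]; ring
  rw [heq]
  apply Summable.hasSum
  refine Summable.of_norm_bounded hxs ?_
  intro R
  rw [norm_mul, Real.norm_eq_abs, Real.norm_eq_abs,
    abs_of_nonneg (by positivity : 0 ≤ x ^ (R + 1) / ((R : ℝ) + 1))]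
  calc _ ≤ x ^ (R + 1) * 1 := mul_le_mul (hxR R) (E_abs l hl _ 1 (fun J => hDp J R)) (abs_nonneg _) (by positivity)
    _ = _ := mul_one _

end PB

namespace PB

noncomputable def JJ {N : ℕ} (β : ℝ) (J : Fin N × Fin N → ℕ) : Fin N → Fin N → ℝ :=
  fun a b => β * (J (a, b) : ℝ)

noncomputable def dl {q N : ℕ} (σ : Fin N → Fin q) (e : Fin N × Fin N) : ℝ :=
  if σ e.1 = σ e.2 then 1 else 0

noncomputable def DD (q : ℕ) {N : ℕ} (β : ℝ) (e : Fin N × Fin N) (J : Fin N × Fin N → ℕ) : ℝ :=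
  ∑ σ : Fin N → Fin q, potts.omega q N (JJ β J) σ * dl σ e

noncomputable def gl (q : ℕ) {N : ℕ} (β : ℝ) (J : Fin N × Fin N → ℕ) : ℝ :=
  Real.log (potts.Z q N (JJ β J))

lemma pE_eq (N : ℕ) (c : ℝ) (g : (Fin N → Fin N → ℕ) → ℝ) :
    potts.E N (fun _ _ => c) g =
      EE (Fin N × Fin N) (c / (2 * N)) (fun J => g (fun i j => J (i, j))) := by
  unfold potts.E EE
  rw [← (Equiv.curry (Fin N) (Fin N) ℕ).tsum_eq]
  apply tsum_congr; intro J
  rw [Fintype.prod_prod_type]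
  rfl

lemma dl_cases {q N : ℕ} (σ : Fin N → Fin q) (e : Fin N × Fin N) : dl σ e = 0 ∨ dl σ e = 1 := by
  unfold dl; split_ifs <;> simp

lemma dl_nonneg {q N : ℕ} (σ : Fin N → Fin q) (e : Fin N × Fin N) : 0 ≤ dl σ e := by
  rcases dl_cases σ e with h | h <;> simp [h]

lemma dl_le {q N : ℕ} (σ : Fin N → Fin q) (e : Fin N × Fin N) : dl σ e ≤ 1 := by
  rcases dl_cases σ e with h | h <;> simp [h]

lemma H_eq {q N : ℕ} (β : ℝ) (J : Fin N × Fin N → ℕ) (σ : Fin N → Fin q) :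
    potts.H q N σ (JJ β J) = ∑ e, β * (J e : ℝ) * dl σ e := by
  unfold potts.H JJ dl
  rw [Fintype.sum_prod_type]

lemma Z_pos (q N : ℕ) (hq : 2 ≤ q) (J : Fin N → Fin N → ℝ) : 0 < potts.Z q N J := by
  unfold potts.Z
  have : Nonempty (Fin q) := ⟨⟨0, by omega⟩⟩
  exact Finset.sum_pos (fun σ _ => Real.exp_pos _) Finset.univ_nonempty

lemma om_nonneg (q N : ℕ) (hq : 2 ≤ q) (J : Fin N → Fin N → ℝ) (σ) : 0 ≤ potts.omega q N J σ :=
  div_nonneg (Real.exp_pos _).le (Z_pos q N hq J).le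

lemma om_sum (q N : ℕ) (hq : 2 ≤ q) (J : Fin N → Fin N → ℝ) : ∑ σ, potts.omega q N J σ = 1 := by
  unfold potts.omega
  rw [← Finset.sum_div]
  exact div_self (Z_pos q N hq J).ne'

lemma DD_nonneg (q N : ℕ) (hq : 2 ≤ q) (β : ℝ) (e : Fin N × Fin N) (J) : 0 ≤ DD q β e J :=
  Finset.sum_nonneg fun σ _ => mul_nonneg (om_nonneg q N hq _ σ) (dl_nonneg σ e)

lemma DD_le (q N : ℕ) (hq : 2 ≤ q) (β : ℝ) (e : Fin N × Fin N) (J) : DD q β e J ≤ 1 := by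
  rw [← om_sum q N hq (JJ β J)]
  exact Finset.sum_le_sum fun σ _ => mul_le_of_le_one_right (om_nonneg q N hq _ σ) (dl_le σ e)

lemma Z_succ (q N : ℕ) (hq : 2 ≤ q) (β : ℝ) (e : Fin N × Fin N) (J : Fin N × Fin N → ℕ) :
    potts.Z q N (JJ β (J + Pi.single e 1)) =
      potts.Z q N (JJ β J) * (1 - (1 - Real.exp (-β)) * DD q β e J) := by
  have hZ := (Z_pos q N hq (JJ β J)).ne'
  have h1 : potts.Z q N (JJ β J) * DD q β e J =
      ∑ σ : Fin N → Fin q, Real.exp (- potts.H q N σ (JJ β J)) * dl σ e := by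
    unfold DD potts.omega
    rw [Finset.mul_sum]
    apply Finset.sum_congr rfl; intro σ _
    field_simp
  have h2 : potts.Z q N (JJ β J) * (1 - (1 - Real.exp (-β)) * DD q β e J) =
     potts.Z q N (JJ β J) - (1 - Real.exp (-β)) * (potts.Z q N (JJ β J) * DD q β e J) := by ring
  rw [h2, h1]
  unfold potts.Z
  rw [Finset.mul_sum, ← Finset.sum_sub_distrib]
  apply Finset.sum_congr rfl; intro σ _
  have h3 : potts.H q N σ (JJ β (J + Pi.single e 1)) = potts.H q N σ (JJ β J) + β * dl σ e := by
    rw [H_eq, H_eq]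
    simp only [Pi.add_apply, Nat.cast_add, mul_add, add_mul, Finset.sum_add_distrib]
    congr 1
    rw [Finset.sum_eq_single e]
    · simp
    · intro b _ hb; simp [Pi.single_eq_of_ne hb]
    · simp
  rw [h3]
  rcases dl_cases σ e with h | h
  · simp [h]
  · simp only [h, mul_one, neg_add, Real.exp_add]; ring

lemma arg_pos (q N : ℕ) (hq : 2 ≤ q) (β : ℝ) (hβ : 0 ≤ β) (e : Fin N × Fin N) (J) :
    Real.exp (-β) ≤ 1 - (1 - Real.exp (-β)) * DD q β e J := by
  have h1 := DD_nonneg q N hq β e J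
  have h2 := DD_le q N hq β e J
  have h3 : Real.exp (-β) ≤ 1 := Real.exp_le_one_iff.2 (by linarith)
  nlinarith

lemma gl_succ (q N : ℕ) (hq : 2 ≤ q) (β : ℝ) (hβ : 0 ≤ β) (e : Fin N × Fin N) (J) :
    gl q β (J + Pi.single e 1) - gl q β J = Real.log (1 - (1 - Real.exp (-β)) * DD q β e J) := by
  unfold gl
  rw [Z_succ q N hq, Real.log_mul (Z_pos q N hq _).ne'
    (lt_of_lt_of_le (Real.exp_pos _) (arg_pos q N hq β hβ e J)).ne']
  ring

lemma log_abs (q N : ℕ) (hq : 2 ≤ q) (β : ℝ) (hβ : 0 ≤ β) (e : Fin N × Fin N) (J) :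
    |Real.log (1 - (1 - Real.exp (-β)) * DD q β e J)| ≤ β := by
  have h1 := arg_pos q N hq β hβ e J
  have h2 := DD_nonneg q N hq β e J
  have h3 : Real.exp (-β) ≤ 1 := Real.exp_le_one_iff.2 (by linarith)
  have h4 : 1 - (1 - Real.exp (-β)) * DD q β e J ≤ 1 := by nlinarith
  rw [abs_le]
  constructor
  · have := Real.log_le_log (Real.exp_pos _) h1
    rwa [Real.log_exp] at this
  · exact (Real.log_nonpos ((Real.exp_pos _).le.trans h1) h4).trans hβ

lemma gl_zero (q N : ℕ) (β : ℝ) : gl q β (0 : Fin N × Fin N → ℕ) = N * Real.log q := by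
  unfold gl potts.Z
  simp [H_eq]

lemma gl_abs (q N : ℕ) (hq : 2 ≤ q) (β : ℝ) (hβ : 0 ≤ β) (J : Fin N × Fin N → ℕ) :
    |gl q β J| ≤ (N * Real.log q + β) * 2 ^ (∑ e, J e) := by
  have hlq : 0 ≤ N * Real.log q := by
    apply mul_nonneg (by positivity) (Real.log_natCast_nonneg q)
  have hup : potts.Z q N (JJ β J) ≤ (q : ℝ) ^ N := by
    unfold potts.Z
    calc _ ≤ ∑ σ : Fin N → Fin q, (1 : ℝ) := by
          apply Finset.sum_le_sum; intro σ _
          rw [Real.exp_le_one_iff, H_eq, neg_nonpos]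
          exact Finset.sum_nonneg fun e _ => mul_nonneg (by positivity) (dl_nonneg σ e)
      _ = _ := by simp
  have hlo : Real.exp (-(β * (∑ e, J e : ℕ))) ≤ potts.Z q N (JJ β J) := by
    unfold potts.Z
    have σ0 : Fin N → Fin q := fun _ => ⟨0, by omega⟩
    refine le_trans ?_ (Finset.single_le_sum (f := fun σ : Fin N → Fin q =>
      Real.exp (- potts.H q N σ (JJ β J))) (fun _ _ => (Real.exp_pos _).le) (Finset.mem_univ σ0))
    apply Real.exp_le_exp.2
    rw [H_eq, neg_le_neg_iff]
    push_cast
    rw [Finset.mul_sum]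
    exact Finset.sum_le_sum fun e _ => mul_le_of_le_one_right (by positivity) (dl_le σ0 e)
  have h1 : gl q β J ≤ N * Real.log q := by
    rw [← Real.log_pow]
    exact Real.log_le_log (Z_pos q N hq _) hup
  have h2 : -(β * (∑ e, J e : ℕ)) ≤ gl q β J := by
    rw [← Real.log_exp (-(β * (∑ e, J e : ℕ)))]
    exact Real.log_le_log (Real.exp_pos _) hlo
  have h3 : ((∑ e, J e : ℕ) : ℝ) ≤ 2 ^ (∑ e, J e) := by
    exact_mod_cast (Nat.lt_two_pow_self (n := ∑ e, J e)).le
  have h4 : (1 : ℝ) ≤ 2 ^ (∑ e, J e) := one_le_pow₀ (by norm_num)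
  have h5 := mul_le_mul_of_nonneg_left h3 hβ
  have h6 := mul_le_mul_of_nonneg_left h4 hlq
  have h7 := mul_nonneg hβ (zero_le_one.trans h4)
  rw [abs_le, add_mul]
  constructor <;> linarith

lemma p_eq (q N : ℕ) (β c : ℝ) :
    potts.p q N β c = 1 / N * EE (Fin N × Fin N) (c / (2 * N)) (gl q β) := by
  unfold potts.p potts.pmat
  rw [pE_eq, ← E_smul]
  rfl

lemma p_zero (q N : ℕ) (hN : 0 < N) (β : ℝ) : potts.p q N β 0 = Real.log q := by
  rw [p_eq, zero_div, E_zero, gl_zero]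
  have : (N : ℝ) ≠ 0 := by positivity
  field_simp

noncomputable def TT (q N : ℕ) (β c : ℝ) : ℝ :=
  ∑ e : Fin N × Fin N, EE (Fin N × Fin N) (c / (2 * N))
    (fun J => Real.log (1 - (1 - Real.exp (-β)) * DD q β e J))

lemma p_deriv (q N : ℕ) (hq : 2 ≤ q) (hN : 0 < N) (β c : ℝ) (hβ : 0 ≤ β) :
    HasDerivAt (fun c => potts.p q N β c) (1 / (2 * (N : ℝ) ^ 2) * TT q N β c) c := by
  have hN' : (N : ℝ) ≠ 0 := by positivity
  have h0 := deriv_E (c / (2 * N)) (gl q β) _ 2 (by norm_num) (gl_abs q N hq β hβ)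
  have h1 : HasDerivAt (fun c : ℝ => c / (2 * N)) (1 / (2 * N)) c :=
    (hasDerivAt_id c).div_const _
  have h2 := (HasDerivAt.comp c h0 h1).const_mul (1 / (N : ℝ))
  have h3 : (fun c => potts.p q N β c) =
    fun c => 1 / (N : ℝ) * ((fun l => EE (Fin N × Fin N) l (gl q β)) ∘ fun c => c / (2 * (N : ℝ))) c := by
    funext c; rw [p_eq]; rfl
  rw [h3]
  refine h2.congr_deriv ?_
  have h4 : ∀ e, EE (Fin N × Fin N) (c / (2 * N)) (fun J => gl q β (J + Pi.single e 1)) -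
      EE (Fin N × Fin N) (c / (2 * N)) (gl q β) = EE (Fin N × Fin N) (c / (2 * N))
    (fun J => Real.log (1 - (1 - Real.exp (-β)) * DD q β e J)) := by
    intro e
    simp only [← gl_succ q N hq β hβ]
    have hA : 0 ≤ N * Real.log q := mul_nonneg (by positivity) (Real.log_natCast_nonneg q)
    rw [E_sub _ _ _ ((N * Real.log q + β) * 2) 2 (by norm_num)]
    · intro J
      refine (gl_abs q N hq β hβ _).trans ?_
      rw [sum_succ, pow_succ]; apply le_of_eq; ring
    · intro J
      refine (gl_abs q N hq β hβ _).trans ?_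
      have : (0:ℝ) < 2 ^ (∑ e, J e) := by positivity
      nlinarith [mul_nonneg (add_nonneg hA hβ) this.le]
  simp only [h4]
  unfold TT
  field_simp

lemma TT_cont (q N : ℕ) (hq : 2 ≤ q) (β : ℝ) (hβ : 0 ≤ β) :
    Continuous (fun c => TT q N β c) := by
  unfold TT
  apply continuous_finsetSum
  intro e _
  exact (cont_E _ β (fun J => log_abs q N hq β hβ e J)).comp (continuous_id.div_const _)

lemma p_int (q N : ℕ) (hq : 2 ≤ q) (hN : 0 < N) (β c : ℝ) (hβ : 0 ≤ β) :
    ∫ c' in (0 : ℝ)..c, 1 / (2 * (N : ℝ) ^ 2) * TT q N β c' = potts.p q N β c - Real.log q := by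
  rw [intervalIntegral.integral_eq_sub_of_hasDerivAt (fun x _ => p_deriv q N hq hN β x hβ)
    ((continuous_const.mul (TT_cont q N hq β hβ)).intervalIntegrable _ _), p_zero q N hN]

lemma rho_sum (q N R : ℕ) (hq : 2 ≤ q) (hN : 0 < N) (S : Fin R → Fin N → Fin q) :
    ∑ s, (potts.rho q N R S s - ((q : ℝ) ^ R)⁻¹) ^ 2 =
      1 / (N : ℝ) ^ 2 * ∑ e : Fin N × Fin N, ∏ r, dl (S r) e - ((q : ℝ) ^ R)⁻¹ := by
  have hN' : (N : ℝ) ≠ 0 := by positivity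
  have hq' : (q : ℝ) ≠ 0 := by positivity
  have hpi : ∀ (i : Fin N) (s : Fin R → Fin q), (∏ r, (if S r i = s r then (1 : ℝ) else 0)) =
      if (fun r => S r i) = s then 1 else 0 := by
    intro i s
    rw [Finset.prod_ite_zero]
    simp [funext_iff]
  have h1 : ∑ s, potts.rho q N R S s = 1 := by
    unfold potts.rho
    rw [← Finset.mul_sum, Finset.sum_comm]
    simp only [hpi]
    simp [hN']
  have h2 : ∑ s, potts.rho q N R S s ^ 2 =
      1 / (N : ℝ) ^ 2 * ∑ e : Fin N × Fin N, ∏ r, dl (S r) e := by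
    unfold potts.rho dl
    simp only [hpi, mul_pow, ← Finset.mul_sum, sq (∑ i, _), Finset.sum_mul_sum]
    rw [Fintype.sum_prod_type]
    congr 1
    · simp
    rw [Finset.sum_comm]
    apply Finset.sum_congr rfl; intro i _
    simp only [Finset.mul_sum]
    rw [Finset.sum_comm]
    apply Finset.sum_congr rfl; intro j _
    simp [eq_comm]
  have h3 : ∀ s, (potts.rho q N R S s - ((q : ℝ) ^ R)⁻¹) ^ 2 =
    potts.rho q N R S s ^ 2 - 2 * ((q : ℝ) ^ R)⁻¹ * potts.rho q N R S s + (((q : ℝ) ^ R)⁻¹) ^ 2 := by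
    intro s; ring
  simp only [h3, Finset.sum_add_distrib, Finset.sum_sub_distrib, ← Finset.mul_sum, h1, h2]
  simp only [Finset.sum_const, Finset.card_univ, Fintype.card_pi, Fintype.card_fin,
    Finset.prod_const, nsmul_eq_mul, Nat.cast_pow]
  have : ((q : ℝ) ^ R) ≠ 0 := by positivity
  field_simp
  ring

lemma om_prod_sum (q N R : ℕ) (hq : 2 ≤ q) (J : Fin N → Fin N → ℝ) :
    ∑ S : Fin R → Fin N → Fin q, ∏ r, potts.omega q N J (S r) = 1 := by
  rw [← Fintype.sum_pow, om_sum q N hq, one_pow]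

lemma gibbs_sum (q N R : ℕ) (hq : 2 ≤ q) (hN : 0 < N) (β : ℝ) (J : Fin N × Fin N → ℕ) :
    ∑ s, ∑ S : Fin R → Fin N → Fin q, (potts.rho q N R S s - ((q : ℝ) ^ R)⁻¹) ^ 2 *
      ∏ r, potts.omega q N (JJ β J) (S r) =
    1 / (N : ℝ) ^ 2 * ∑ e, DD q β e J ^ R - ((q : ℝ) ^ R)⁻¹ := by
  rw [Finset.sum_comm]
  simp only [← Finset.sum_mul, rho_sum q N R hq hN]
  simp only [sub_mul, Finset.sum_sub_distrib, ← Finset.mul_sum, om_prod_sum q N R hq, mul_one,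
    mul_assoc]
  congr 2
  simp only [Finset.sum_mul]
  rw [Finset.sum_comm]
  apply Finset.sum_congr rfl; intro e _
  unfold DD
  rw [Fintype.sum_pow]
  apply Finset.sum_congr rfl; intro S _
  rw [← Finset.prod_mul_distrib]
  apply Finset.prod_congr rfl; intro r _; ring

lemma rho_abs (q N R : ℕ) (hN : 0 < N) (hq : 2 ≤ q) (S : Fin R → Fin N → Fin q) (s) :
    (potts.rho q N R S s - ((q : ℝ) ^ R)⁻¹) ^ 2 ≤ 1 := by
  have hN' : (0 : ℝ) < N := by positivity
  have hp : ∀ i : Fin N, 0 ≤ (∏ r, (if S r i = s r then (1 : ℝ) else 0)) ∧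
      (∏ r, (if S r i = s r then (1 : ℝ) else 0)) ≤ 1 := by
    intro i
    constructor
    · apply Finset.prod_nonneg; intro r _; split_ifs <;> norm_num
    · apply Finset.prod_le_one <;> intro r _ <;> split_ifs <;> norm_num
  have h0 : 0 ≤ potts.rho q N R S s :=
    mul_nonneg (by positivity) (Finset.sum_nonneg fun i _ => (hp i).1)
  have h1 : potts.rho q N R S s ≤ 1 := by
    unfold potts.rho
    have : ∑ i : Fin N, (∏ r, (if S r i = s r then (1 : ℝ) else 0)) ≤ ∑ i : Fin N, (1 : ℝ) :=
      Finset.sum_le_sum fun i _ => (hp i).2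
    simp only [Finset.sum_const, Finset.card_univ, Fintype.card_fin, nsmul_eq_mul, mul_one] at this
    rw [one_div, inv_mul_le_iff₀ hN']; linarith
  have h2 : (1 : ℝ) ≤ (q : ℝ) ^ R := one_le_pow₀ (by exact_mod_cast (by omega : 1 ≤ q))
  have h3 : ((q : ℝ) ^ R)⁻¹ ≤ 1 := inv_le_one_of_one_le₀ h2
  have h4 : 0 ≤ ((q : ℝ) ^ R)⁻¹ := by positivity
  rw [sq_le_one_iff_abs_le_one, abs_le]
  constructor <;> linarith

noncomputable def GG (q N R : ℕ) (β : ℝ) (s : Fin R → Fin q) (J : Fin N × Fin N → ℕ) : ℝ :=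
  ∑ S : Fin R → Fin N → Fin q, (potts.rho q N R S s - ((q : ℝ) ^ R)⁻¹) ^ 2 *
      ∏ r, potts.omega q N (JJ β J) (S r)

lemma GG_abs (q N R : ℕ) (hN : 0 < N) (hq : 2 ≤ q) (β : ℝ) (s : Fin R → Fin q) (J : Fin N × Fin N → ℕ) :
    |GG q N R β s J| ≤ 1 := by
  have hom : ∀ S : Fin R → Fin N → Fin q, 0 ≤ ∏ r, potts.omega q N (JJ β J) (S r) :=
    fun S => Finset.prod_nonneg fun r _ => om_nonneg q N hq _ _
  unfold GG
  rw [abs_of_nonneg (Finset.sum_nonneg fun S _ => mul_nonneg (sq_nonneg _) (hom S)),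
    ← om_prod_sum q N R hq (JJ β J)]
  exact Finset.sum_le_sum fun S _ => mul_le_of_le_one_left (hom S) (rho_abs q N R hN hq S s)

lemma rq_eq (q N R : ℕ) (β c : ℝ) (s : Fin R → Fin q) :
    potts.replicaQuenched q N R β c (fun S => (potts.rho q N R S s - ((q : ℝ) ^ R)⁻¹) ^ 2) =
      EE (Fin N × Fin N) (c / (2 * N)) (GG q N R β s) := by
  unfold potts.replicaQuenched
  rw [pE_eq]
  rfl

noncomputable def AR (q N : ℕ) (β c : ℝ) (R : ℕ) : ℝ :=
  1 / (N : ℝ) ^ 2 * ∑ e, EE (Fin N × Fin N) (c / (2 * N)) (fun J => DD q β e J ^ R) - ((q : ℝ) ^ R)⁻¹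

lemma DDp_abs (q N : ℕ) (hq : 2 ≤ q) (β : ℝ) (e : Fin N × Fin N) (R : ℕ) (J) :
    |DD q β e J ^ R| ≤ 1 := by
  rw [abs_of_nonneg (pow_nonneg (DD_nonneg q N hq β e J) _)]
  exact pow_le_one₀ (DD_nonneg q N hq β e J) (DD_le q N hq β e J)

lemma rq_sum (q N R : ℕ) (hN : 0 < N) (hq : 2 ≤ q) (β c : ℝ) :
    ∑ s, EE (Fin N × Fin N) (c / (2 * N)) (GG q N R β s) = AR q N β c R := by
  rw [← E_sum _ _ _ 1 (fun s J => GG_abs q N R hN hq β s J)]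
  unfold GG
  simp only [gibbs_sum q N R hq hN]
  have hb : ∀ J : Fin N × Fin N → ℕ, |∑ e, DD q β e J ^ R| ≤ (N * N : ℕ) := by
    intro J
    refine (Finset.abs_sum_le_sum_abs _ _).trans ?_
    refine (Finset.sum_le_sum fun e _ => DDp_abs q N hq β e R J).trans ?_
    simp
  set B : ℝ := 1 / (N : ℝ) ^ 2 * (N * N : ℕ) + ((q : ℝ) ^ R)⁻¹ with hB
  rw [E_sub _ _ _ B 1 le_rfl, E_const, E_smul, E_sum _ _ _ 1 (fun e J => DDp_abs q N hq β e R J)]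
  · rfl
  · intro J
    rw [one_pow, mul_one, abs_mul, abs_of_nonneg (by positivity : 0 ≤ 1 / (N : ℝ) ^ 2), hB]
    have := mul_le_mul_of_nonneg_left (hb J) (by positivity : 0 ≤ 1 / (N : ℝ) ^ 2)
    have h2 : 0 ≤ ((q : ℝ) ^ R)⁻¹ := by positivity
    linarith
  · intro J
    rw [one_pow, mul_one, abs_of_nonneg (by positivity : 0 ≤ ((q : ℝ) ^ R)⁻¹), hB]
    have : 0 ≤ 1 / (N : ℝ) ^ 2 * (N * N : ℕ) := by positivity
    linarith

lemma AR_cont (q N R : ℕ) (hq : 2 ≤ q) (β : ℝ) : Continuous (fun c => AR q N β c R) := by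
  unfold AR
  refine (continuous_const.mul (continuous_finsetSum _ fun e _ => ?_)).sub continuous_const
  exact (cont_E _ 1 (fun J => DDp_abs q N hq β e R J)).comp (continuous_id.div_const _)

lemma AR_abs (q N R : ℕ) (hN : 0 < N) (hq : 2 ≤ q) (β c : ℝ) (hc : 0 ≤ c) :
    |AR q N β c R| ≤ 2 := by
  have hb : |∑ e, EE (Fin N × Fin N) (c / (2 * N)) (fun J => DD q β e J ^ R)| ≤ (N : ℝ) ^ 2 := by
    refine (Finset.abs_sum_le_sum_abs _ _).trans ?_
    refine (Finset.sum_le_sum fun e _ => E_abs _ (by positivity) _ 1 (DDp_abs q N hq β e R)).trans ?_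
    simp [sq]
  have hN' : (0 : ℝ) < N := by positivity
  have h2 : (1 : ℝ) ≤ (q : ℝ) ^ R := one_le_pow₀ (by exact_mod_cast (by omega : 1 ≤ q))
  have h3 : ((q : ℝ) ^ R)⁻¹ ≤ 1 := inv_le_one_of_one_le₀ h2
  have h4 : 0 ≤ ((q : ℝ) ^ R)⁻¹ := by positivity
  have h5 := mul_le_mul_of_nonneg_left hb (by positivity : 0 ≤ 1 / (N : ℝ) ^ 2)
  have h6 : 1 / (N : ℝ) ^ 2 * (N : ℝ) ^ 2 = 1 := by field_simp
  unfold AR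
  refine (abs_sub _ _).trans ?_
  rw [abs_mul, abs_of_nonneg (by positivity : 0 ≤ 1 / (N : ℝ) ^ 2), abs_of_nonneg h4]
  linarith

lemma AR_hasSum (q N : ℕ) (hq : 2 ≤ q) (β c : ℝ) (hβ : 0 ≤ β) (hc : 0 ≤ c) :
    HasSum (fun R : ℕ => (1 - Real.exp (-β)) ^ (R + 1) / ((R : ℝ) + 1) * AR q N β c (R + 1))
      (Real.log (1 - (1 - Real.exp (-β)) / q) - 2 * (1 / (2 * (N : ℝ) ^ 2) * TT q N β c)) := by
  have hx0 : 0 ≤ 1 - Real.exp (-β) := by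
    have : Real.exp (-β) ≤ 1 := Real.exp_le_one_iff.2 (by linarith)
    linarith
  have hx1 : 1 - Real.exp (-β) < 1 := by linarith [Real.exp_pos (-β)]
  set x := 1 - Real.exp (-β) with hx
  have h1 : HasSum (fun R : ℕ => ∑ e, x ^ (R + 1) / ((R : ℝ) + 1) *
      EE (Fin N × Fin N) (c / (2 * N)) (fun J => DD q β e J ^ (R + 1)))
      (∑ e, - EE (Fin N × Fin N) (c / (2 * N)) (fun J => Real.log (1 - x * DD q β e J))) :=
    hasSum_sum fun e _ => E_log _ x (by positivity) hx0 hx1 (DD q β e)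
      (DD_nonneg q N hq β e) (DD_le q N hq β e)
  have hq1 : (1 : ℝ) ≤ q := by exact_mod_cast (by omega : 1 ≤ q)
  have h2 := Real.hasSum_pow_div_log_of_abs_lt_one (x := x / q) (by
    rw [abs_of_nonneg (by positivity)]
    exact lt_of_le_of_lt (div_le_self hx0 hq1) hx1)
  have h3 := (h1.mul_left (1 / (N : ℝ) ^ 2)).sub h2
  have e1 : (fun R : ℕ => x ^ (R + 1) / ((R : ℝ) + 1) * AR q N β c (R + 1)) =
      fun b : ℕ => 1 / (N : ℝ) ^ 2 * (∑ e, x ^ (b + 1) / ((b : ℝ) + 1) *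
      EE (Fin N × Fin N) (c / (2 * N)) (fun J => DD q β e J ^ (b + 1))) -
        (x / q) ^ (b + 1) / ((b : ℝ) + 1) := by
    funext R
    unfold AR
    rw [← Finset.mul_sum, div_pow]
    ring
  have e2 : Real.log (1 - x / q) - 2 * (1 / (2 * (N : ℝ) ^ 2) * TT q N β c) =
      1 / (N : ℝ) ^ 2 * (∑ e, - EE (Fin N × Fin N) (c / (2 * N))
        (fun J => Real.log (1 - x * DD q β e J))) - -Real.log (1 - x / q) := by
   unfold TT
   rw [Finset.sum_neg_distrib, ← hx]
   ring
  rw [e1, e2]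
  exact h3

end PB

/-- sum rule expressing `𝒫(β,c) - p_N(β,c)` via replica overlaps. -/
theorem statement3 (q N : ℕ) (hq : 2 ≤ q) (hN : 0 < N) (β c : ℝ)
    (hβ : 0 ≤ β) (hc : 0 ≤ c) :
    potts.annealed q β c - potts.p q N β c =
      (1 / 2) * ∑' R : ℕ,
        ((1 - Real.exp (-β)) ^ (R + 1) / ((R : ℝ) + 1)) *
          ∑ s : Fin (R + 1) → Fin q,
            ∫ c' in (0 : ℝ)..c,
              potts.replicaQuenched q N (R + 1) β c'
                (fun S =>
                  (potts.rho q N (R + 1) S s - ((q : ℝ) ^ (R + 1))⁻¹) ^ 2) := by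
  have hN' : (N : ℝ) ≠ 0 := by positivity
  have hint : ∀ (R : ℕ), ∑ s : Fin (R + 1) → Fin q, ∫ c' in (0 : ℝ)..c,
      potts.replicaQuenched q N (R + 1) β c'
        (fun S => (potts.rho q N (R + 1) S s - ((q : ℝ) ^ (R + 1))⁻¹) ^ 2) =
      ∫ c' in (0 : ℝ)..c, PB.AR q N β c' (R + 1) := by
    intro R
    simp only [PB.rq_eq]
    rw [← intervalIntegral.integral_finsetSum]
    · simp only [PB.rq_sum q N _ hN hq]
    · intro s _
      apply Continuous.intervalIntegrable
      exact (PB.cont_E _ 1 (fun J => PB.GG_abs q N _ hN hq β s J)).comp (continuous_id.div_const _)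
  simp only [hint, ← intervalIntegral.integral_const_mul]
  have hx0 : 0 ≤ 1 - Real.exp (-β) := by
    have : Real.exp (-β) ≤ 1 := Real.exp_le_one_iff.2 (by linarith)
    linarith
  have hx1 : 1 - Real.exp (-β) < 1 := by linarith [Real.exp_pos (-β)]
  have hxs : Summable (fun R : ℕ => (1 - Real.exp (-β)) ^ (R + 1) * 2) :=
    ((summable_nat_add_iff 1).2 (summable_geometric_of_lt_one hx0 hx1)).mul_right 2
  have hS := intervalIntegral.hasSum_integral_of_dominated_convergence (μ := volume) (a := 0) (b := c)
    (F := fun (R : ℕ) (c' : ℝ) =>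
      (1 - Real.exp (-β)) ^ (R + 1) / ((R : ℝ) + 1) * PB.AR q N β c' (R + 1))
    (f := fun c' => Real.log (1 - (1 - Real.exp (-β)) / q) -
      2 * (1 / (2 * (N : ℝ) ^ 2) * PB.TT q N β c'))
    (fun R _ => (1 - Real.exp (-β)) ^ (R + 1) * 2)
    (fun R => (continuous_const.mul (PB.AR_cont q N (R + 1) hq β)).aestronglyMeasurable)
    (fun R => Filter.Eventually.of_forall fun t ht => by
      rw [Set.uIoc_of_le hc] at ht
      rw [norm_mul, Real.norm_eq_abs, Real.norm_eq_abs, abs_of_nonneg (by positivity)]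
      refine mul_le_mul (div_le_self (by positivity) ?_) (PB.AR_abs q N _ hN hq β t ht.1.le)
        (abs_nonneg _) (by positivity)
      have : (0 : ℝ) ≤ R := by positivity
      linarith)
    (Filter.Eventually.of_forall fun t _ => hxs)
    intervalIntegrable_const
    (Filter.Eventually.of_forall fun t ht => by
      rw [Set.uIoc_of_le hc] at ht
      exact PB.AR_hasSum q N hq β t hβ ht.1.le)
  have hI : IntervalIntegrable (fun c' => 2 * (1 / (2 * (N : ℝ) ^ 2) * PB.TT q N β c')) volume 0 c :=
    (continuous_const.mul (continuous_const.mul (PB.TT_cont q N hq β hβ))).intervalIntegrable _ _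
  rw [hS.tsum_eq, intervalIntegral.integral_sub intervalIntegrable_const hI,
    intervalIntegral.integral_const_mul 2, PB.p_int q N hq hN β c hβ]
  unfold potts.annealed
  simp
  ring
end
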